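/- arXiv:2411.19152 — 8 statements merged into one kernel-verified Lean document; each statement's English description precedes it below -/
import Mathlib

section
/- For every L ∈ ℕ and every polynomial P ∈ ℂ[z] of degree at most L satisfying |P(e^{ix})| ≤ 1 for all x ∈ ℝ, there exist parameters θ, φ ∈ ℝ^{L+1}, λ ∈ ℝ, and a polynomial Q ∈ ℂ[z] of degree at most L with |P(e^{ix})|² + |Q(e^{ix})|² = 1 for all x ∈ ℝ, such that for all x ∈ ℝ the first column of the matrix product (∏_{j=1}^{L} R(θ_j, φ_j, x)) · R(θ₀, φ₀, λ) equals (P(e^{ix}), Q(e^{ix}))ᵀ, where ∏_{j=1}^{L} M_j denotes the ordered product M_L ⋯ M_1. -/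
/-!
*Completion.* On the unit circle `1 - |P|²` is `z ^ (-L) * G(z)` with
`G = X ^ L - P * conjReflect L P`, and nonnegativity makes `G` its own conjugate-reciprocal. By
Fejér–Riesz `G = Q * conjReflect L Q`, whence `|P|² + |Q|² = 1`: the roots of `G` off the circle
pair up as `w, 1 / conj w`, a root on the circle is double because the nonnegative function
`x ↦ e^{-iLx} G(e^{ix})` has zero derivative there, and each such pair contributes a factor
`(X - C w) * conjReflect 1 (X - C w)` that can be divided out.

*Peeling.* If `|P|² + |Q|² = 1` on the circle, then the constant and the top coefficient vectors of
`(P, Q)` are orthogonal in `ℂ²`, as one sees by comparing constant coefficients in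
`P * conjReflect L P + Q * conjReflect L Q = X ^ L`. Some constant unitary `R(θ, φ, 0)` therefore
has its first column orthogonal to the former vector and its second column orthogonal to the latter.
Its adjoint turns `(P, Q)` into a vector whose first entry is divisible by `z` and whose second
entry has smaller degree; dividing the first entry by `z` removes one gate
`R(θ, φ, x) = R(θ, φ, 0) * diag(e^{ix}, 1)` and lowers the degree by one.
-/

open Complex Matrix

/-- Ordered product `M_L ⋯ M_1` (empty product is `1`). -/
noncomputable def oprod (L : ℕ) (M : ℕ → Matrix (Fin 2) (Fin 2) ℂ) : Matrix (Fin 2) (Fin 2) ℂ :=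
  match L with
  | 0 => 1
  | n + 1 => M (n + 1) * oprod n M

/-- The generalized quantum signal processing building block
`R(θ, φ, λ) = [[e^{i(φ+λ)} cos θ, e^{iφ} sin θ], [e^{iλ} sin θ, −cos θ]]`. -/
noncomputable def Rgate (θ φ lam : ℝ) : Matrix (Fin 2) (Fin 2) ℂ :=
  !![Complex.exp (I * ((φ : ℂ) + (lam : ℂ))) * (Real.cos θ : ℂ),
       Complex.exp (I * (φ : ℂ)) * (Real.sin θ : ℂ);
     Complex.exp (I * (lam : ℂ)) * (Real.sin θ : ℂ),
       -(Real.cos θ : ℂ)]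

open Polynomial
open scoped ComplexOrder

section ConjReflect

variable {R : Type*}

section CommSemiring

variable [CommSemiring R] [StarRing R]

/-- The conjugate-reciprocal `z ^ N * conj (P (1 / conj z))` of a polynomial `P` of degree at most
`N`. The bound `N` is a parameter, so that the coefficients are `conj (P.coeff (N - i))` even when
`P.natDegree < N`. -/
noncomputable def conjReflect (N : ℕ) (P : R[X]) : R[X] := (P.map (starRingEnd R)).reflect N

lemma natDegree_conjReflect_le {N : ℕ} {P : R[X]} (hP : P.natDegree ≤ N) :
    (conjReflect N P).natDegree ≤ N :=
  natDegree_reflect_le.trans (max_le le_rfl (natDegree_map_le.trans hP))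

lemma coeff_zero_conjReflect (N : ℕ) (P : R[X]) :
    (conjReflect N P).coeff 0 = star (P.coeff N) := by
  simp [conjReflect, coeff_reflect, starRingEnd_apply]

lemma conjReflect_mul {M N : ℕ} {P Q : R[X]} (hP : P.natDegree ≤ M) (hQ : Q.natDegree ≤ N) :
    conjReflect (M + N) (P * Q) = conjReflect M P * conjReflect N Q := by
  rw [conjReflect, Polynomial.map_mul,
    reflect_mul _ _ (natDegree_map_le.trans hP) (natDegree_map_le.trans hQ)]
  rfl

lemma conjReflect_zero_C (a : R) : conjReflect 0 (C a) = C (star a) := by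
  simp [conjReflect, starRingEnd_apply]

lemma eval_conjReflect {N : ℕ} {P : R[X]} (hP : P.natDegree ≤ N) {z : R} (hz : z * star z = 1) :
    (conjReflect N P).eval z = z ^ N * star (P.eval z) := by
  let : Invertible (star z) := ⟨z, hz, by rw [mul_comm, hz]⟩
  have hreflect : (conjReflect N P).eval z * star z ^ N = star (P.eval z) := by
    have h := eval₂_reflect_mul_pow (RingHom.id R) (star z) N (P.map (starRingEnd R))
      (natDegree_map_le.trans hP)
    rw [← Polynomial.eval, ← Polynomial.eval] at h
    exact h.trans (eval_map_apply (starRingEnd R) z)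
  rw [← hreflect, mul_left_comm, ← mul_pow, hz, one_pow, mul_one]

end CommSemiring

lemma conjReflect_X_sub_C [CommRing R] [StarRing R] (w : R) :
    conjReflect 1 (X - C w) = 1 - C (star w) * X := by
  simp [conjReflect, reflect_sub, reflect_C, starRingEnd_apply]

lemma exists_eq_X_sub_C_mul [CommRing R] [Nontrivial R] {n : ℕ} {P : R[X]} {w : R}
    (hP : P.natDegree ≤ n + 1) (hw : P.IsRoot w) :
    ∃ Q : R[X], Q.natDegree ≤ n ∧ P = (X - C w) * Q :=
  ⟨P /ₘ (X - C w), by rw [natDegree_divByMonic _ (monic_X_sub_C w), natDegree_X_sub_C]; omega,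
    (mul_divByMonic_eq_iff_isRoot.mpr hw).symm⟩

end ConjReflect

section FejerRiesz

instance : Nontrivial Circle := ⟨1, -1, (Circle.neg_ne_self 1).symm⟩

instance : Infinite Circle := PreconnectedSpace.infinite

lemma finite_circle_zeros {P : ℂ[X]} (hP : P ≠ 0) : {z : Circle | P.eval (z : ℂ) = 0}.Finite :=
  (finite_setOfPred_isRoot hP).preimage Circle.coe_injective.injOn

lemma eq_of_eval_circle_eq {P Q : ℂ[X]} (h : ∀ z : Circle, P.eval (z : ℂ) = Q.eval (z : ℂ)) :
    P = Q :=
  eq_of_infinite_eval_eq P Q <|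
    (Set.infinite_range_of_injective (α := Circle) Circle.coe_injective).mono <|
      Set.range_subset_iff.mpr h

lemma circle_mul_star (z : Circle) : (z : ℂ) * star (z : ℂ) = 1 := by
  rw [Complex.star_def, ← Circle.coe_inv_eq_conj, Circle.coe_inv, mul_inv_cancel₀ z.coe_ne_zero]

lemma continuous_circle_coe : Continuous ((↑) : Circle → ℂ) := continuous_subtype_val

lemma eval_mul_conjReflect {n : ℕ} {P : ℂ[X]} (hP : P.natDegree ≤ n) (z : Circle) :
    (P * conjReflect n P).eval (z : ℂ) = (z : ℂ) ^ n * (‖P.eval (z : ℂ)‖ ^ 2 : ℝ) := by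
  rw [eval_mul, eval_conjReflect hP (circle_mul_star z), mul_left_comm, Complex.star_def,
    Complex.mul_conj', Complex.ofReal_pow]

/-- The trigonometric polynomial `z ^ (-n) * G(z)` is real and nonnegative on the unit circle. -/
def NonnegOnCircle (n : ℕ) (G : ℂ[X]) : Prop := ∀ z : Circle, 0 ≤ G.eval (z : ℂ) / (z : ℂ) ^ n

lemma NonnegOnCircle.conjReflect_eq {n : ℕ} {G : ℂ[X]} (h : NonnegOnCircle n G)
    (hG : G.natDegree ≤ 2 * n) : conjReflect (2 * n) G = G := by
  refine eq_of_eval_circle_eq fun z => ?_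
  have hz : (z : ℂ) ^ n * star (z : ℂ) ^ n = 1 := by rw [← mul_pow, circle_mul_star, one_pow]
  have hreal : star (G.eval (z : ℂ)) / star (z : ℂ) ^ n = G.eval (z : ℂ) / (z : ℂ) ^ n := by
    rw [← star_pow, ← star_div₀, (IsSelfAdjoint.of_nonneg (h z)).star_eq]
  rw [div_eq_div_iff (right_ne_zero_of_mul_eq_one hz) (left_ne_zero_of_mul_eq_one hz)] at hreal
  rw [eval_conjReflect hG (circle_mul_star z), two_mul, pow_add]
  linear_combination (z : ℂ) ^ n * hreal + G.eval (z : ℂ) * hz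

lemma NonnegOnCircle.of_mul_conjReflect_mul {m n : ℕ} {P G : ℂ[X]} (hP : P.natDegree ≤ m)
    (hP0 : P ≠ 0) (h : NonnegOnCircle (m + n) (P * conjReflect m P * G)) :
    NonnegOnCircle n G := by
  -- The finitely many zeros of `P` on the circle are reached by continuity.
  have hoff : ∀ z : Circle, P.eval (z : ℂ) ≠ 0 → 0 ≤ G.eval (z : ℂ) / (z : ℂ) ^ n := by
    intro z hz
    have hpos : (0 : ℂ) < (‖P.eval (z : ℂ)‖ ^ 2 : ℝ) :=
      Complex.zero_lt_real.mpr (pow_pos (norm_pos_iff.mpr hz) 2)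
    have hz' := h z
    rw [eval_mul, eval_mul_conjReflect hP, pow_add, mul_assoc,
      mul_div_mul_left _ _ (pow_ne_zero _ z.coe_ne_zero), mul_div_assoc] at hz'
    exact le_of_mul_le_mul_left (by rwa [mul_zero]) hpos
  have hclosed : IsClosed {z : Circle | 0 ≤ G.eval (z : ℂ) / (z : ℂ) ^ n} :=
    isClosed_le continuous_const <| (G.continuous.comp continuous_circle_coe).div
      (continuous_circle_coe.pow n) fun z => pow_ne_zero n (Circle.coe_ne_zero z)
  have hdense : Dense {z : Circle | P.eval (z : ℂ) = 0}ᶜ := by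
    simpa [Set.compl_eq_univ_sdiff] using dense_univ.sdiff_finite (finite_circle_zeros hP0)
  exact fun z => closure_minimal hoff hclosed (hdense z)

lemma eq_zero_of_hasDerivAt_of_nonneg {f : ℝ → ℂ} {f' : ℂ} {x : ℝ} (hf : HasDerivAt f f' x)
    (hnonneg : ∀ y, 0 ≤ f y) (hx : f x = 0) : f' = 0 := by
  have hre : HasDerivAt (fun y => (f y).re) f'.re x :=
    Complex.reCLM.hasFDerivAt.comp_hasDerivAt x hf
  have him : HasDerivAt (fun y => (f y).im) f'.im x :=
    Complex.imCLM.hasFDerivAt.comp_hasDerivAt x hf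
  have hmin : IsLocalMin (fun y => (f y).re) x :=
    .of_forall fun y => by simpa [hx] using (Complex.nonneg_iff.mp (hnonneg y)).1
  refine Complex.ext (hmin.hasDerivAt_eq_zero hre) (him.unique ?_)
  simp_rw [← (Complex.nonneg_iff.mp (hnonneg _)).2]
  exact hasDerivAt_const x 0

lemma hasDerivAt_circle_exp (x : ℝ) :
    HasDerivAt (fun y => (Circle.exp y : ℂ)) (Circle.exp x * Complex.I) x := by
  simpa using (Complex.ofRealCLM.hasDerivAt.mul_const Complex.I).cexp

lemma NonnegOnCircle.isRoot_derivative {n : ℕ} {G : ℂ[X]} (h : NonnegOnCircle n G) {w : Circle}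
    (hw : G.IsRoot (w : ℂ)) : (derivative G).IsRoot (w : ℂ) := by
  -- The nonnegative function `x ↦ G(e^{ix}) / e^{inx}` has a minimum at the root.
  obtain ⟨x, rfl⟩ := Circle.exp_surjective w
  have hderiv := ((G.hasDerivAt _).comp x (hasDerivAt_circle_exp x)).div
    ((hasDerivAt_circle_exp x).pow n) (pow_ne_zero n (Circle.exp x).coe_ne_zero)
  have hzero := eq_zero_of_hasDerivAt_of_nonneg hderiv (fun y => h (Circle.exp y))
    (by simp [hw.eq_zero, -Circle.coe_exp])
  simpa [hw.eq_zero, -Circle.coe_exp] using hzero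

lemma NonnegOnCircle.exists_isRoot {n : ℕ} {G : ℂ[X]} (h : NonnegOnCircle (n + 1) G)
    (hG : G.natDegree ≤ 2 * (n + 1)) : ∃ w, G.IsRoot w := by
  refine IsAlgClosed.exists_root G fun hdeg => ?_
  have htop : G.coeff (2 * (n + 1)) = 0 :=
    coeff_eq_zero_of_natDegree_lt (by rw [natDegree_eq_zero_iff_degree_le_zero.mpr hdeg.le]; omega)
  have hbot : G.coeff 0 = 0 := by
    rw [← h.conjReflect_eq hG, coeff_zero_conjReflect, htop, star_zero]
  rw [eq_C_of_degree_eq_zero hdeg, hbot, C_0, degree_zero] at hdeg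
  exact absurd hdeg (by simp)

lemma NonnegOnCircle.exists_eq_mul_conjReflect_mul {n : ℕ} {G : ℂ[X]}
    (h : NonnegOnCircle (n + 1) G) (hG : G.natDegree ≤ 2 * (n + 1)) {w : ℂ} (hw : G.IsRoot w) :
    ∃ K : ℂ[X], K.natDegree ≤ 2 * n ∧ G = (X - C w) * conjReflect 1 (X - C w) * K := by
  obtain ⟨H, hH, rfl⟩ := exists_eq_X_sub_C_mul (n := 2 * n + 1) hG hw
  by_cases hnorm : ‖w‖ = 1
  · obtain ⟨w, rfl⟩ : ∃ u : Circle, (u : ℂ) = w := ⟨⟨w, mem_sphere_zero_iff_norm.mpr hnorm⟩, rfl⟩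
    have hHw : H.IsRoot w := by simpa [derivative_mul] using h.isRoot_derivative hw
    obtain ⟨K, hK, rfl⟩ := exists_eq_X_sub_C_mul hH hHw
    refine ⟨C (-(w : ℂ)) * K, (natDegree_C_mul_le _ _).trans hK, ?_⟩
    have hC : C (w : ℂ) * C (star (w : ℂ)) = 1 := by rw [← C_mul, circle_mul_star, C_1]
    rw [conjReflect_X_sub_C, C_neg]
    linear_combination -(X - C (w : ℂ)) * X * K * hC
  · have hreflect : (X - C w) * H = conjReflect 1 (X - C w) * conjReflect (2 * n + 1) H := by
      rw [← conjReflect_mul (natDegree_X_sub_C_le w) hH, add_comm 1]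
      exact (h.conjReflect_eq hG).symm
    have hsq : ‖w‖ ^ 2 ≠ 1 :=
      (pow_eq_one_iff_of_nonneg (norm_nonneg w) two_ne_zero).not.mpr hnorm
    have hHw : (conjReflect (2 * n + 1) H).IsRoot w := by
      have hroot := congrArg (eval w) hreflect
      rw [hw.eq_zero, eval_mul, conjReflect_X_sub_C] at hroot
      refine (mul_eq_zero.mp hroot.symm).resolve_left ?_
      rw [eval_sub, eval_one, eval_mul, eval_C, eval_X, Complex.star_def, Complex.conj_mul',
        sub_eq_zero]
      exact_mod_cast hsq.symm
    obtain ⟨K, hK, hHK⟩ := exists_eq_X_sub_C_mul (natDegree_conjReflect_le hH) hHw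
    exact ⟨K, hK, by rw [hreflect, hHK]; ring⟩

theorem fejer_riesz {n : ℕ} {G : ℂ[X]} (hG : G.natDegree ≤ 2 * n) (h : NonnegOnCircle n G) :
    ∃ Q : ℂ[X], Q.natDegree ≤ n ∧ G = Q * conjReflect n Q := by
  induction n generalizing G with
  | zero =>
    obtain ⟨c, rfl⟩ := natDegree_eq_zero.mp (Nat.le_zero.mp hG)
    have hc : 0 ≤ c := by simpa using h 1
    lift c to ℝ using (Complex.nonneg_iff.mp hc).2.symm
    refine ⟨C (√c : ℂ), by simp, ?_⟩
    rw [conjReflect_zero_C, ← C_mul, Complex.star_def, Complex.conj_ofReal, ← Complex.ofReal_mul,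
      Real.mul_self_sqrt (Complex.zero_le_real.mp hc)]
  | succ n ih =>
    obtain ⟨w, hw⟩ := h.exists_isRoot hG
    obtain ⟨K, hK, rfl⟩ := h.exists_eq_mul_conjReflect_mul hG hw
    have hX := natDegree_X_sub_C_le w
    rw [add_comm n 1] at h ⊢
    obtain ⟨Q, hQ, rfl⟩ := ih hK (h.of_mul_conjReflect_mul hX (X_sub_C_ne_zero w))
    refine ⟨(X - C w) * Q, natDegree_mul_le_of_le hX hQ, ?_⟩
    rw [conjReflect_mul hX hQ]
    ring

lemma exists_complementary {n : ℕ} {P : ℂ[X]} (hdeg : P.natDegree ≤ n)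
    (hP : ∀ z : Circle, ‖P.eval (z : ℂ)‖ ≤ 1) :
    ∃ Q : ℂ[X], Q.natDegree ≤ n ∧
      ∀ z : Circle, ‖P.eval (z : ℂ)‖ ^ 2 + ‖Q.eval (z : ℂ)‖ ^ 2 = 1 := by
  have heval (z : Circle) : (X ^ n - P * conjReflect n P).eval (z : ℂ)
      = (z : ℂ) ^ n * (1 - ‖P.eval (z : ℂ)‖ ^ 2 : ℝ) := by
    rw [eval_sub, eval_mul_conjReflect hdeg, eval_pow, eval_X]
    push_cast
    ring
  have hnonneg : NonnegOnCircle n (X ^ n - P * conjReflect n P) := by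
    intro z
    rw [heval, mul_div_cancel_left₀ _ (pow_ne_zero n z.coe_ne_zero), Complex.zero_le_real]
    exact sub_nonneg.mpr (pow_le_one₀ (norm_nonneg _) (hP z))
  have hdeg' : (X ^ n - P * conjReflect n P).natDegree ≤ 2 * n := by
    have hmul := natDegree_mul_le_of_le hdeg (natDegree_conjReflect_le hdeg)
    exact (natDegree_sub_le_of_le (natDegree_X_pow_le n) hmul).trans (by omega)
  obtain ⟨Q, hQ, hfactor⟩ := fejer_riesz hdeg' hnonneg
  refine ⟨Q, hQ, fun z => ?_⟩
  have hz := congrArg (eval (z : ℂ)) hfactor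
  rw [heval, eval_mul_conjReflect hQ] at hz
  have hz' := Complex.ofReal_injective (mul_left_cancel₀ (pow_ne_zero n z.coe_ne_zero) hz)
  linarith

end FejerRiesz

section Gate

lemma sum_norm_sq_mulVec {𝕜 n : Type*} [RCLike 𝕜] [Fintype n] [DecidableEq n] {U : Matrix n n 𝕜}
    (hU : U ∈ unitaryGroup n 𝕜) (v : n → 𝕜) : ∑ i, ‖(U *ᵥ v) i‖ ^ 2 = ∑ i, ‖v i‖ ^ 2 := by
  have hdot (w : n → 𝕜) : ((∑ i, ‖w i‖ ^ 2 : ℝ) : 𝕜) = star w ⬝ᵥ w := by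
    simp [dotProduct, RCLike.conj_mul]
  apply RCLike.ofReal_injective (K := 𝕜)
  rw [hdot, hdot, star_mulVec, dotProduct_mulVec, vecMul_vecMul, ← star_eq_conjTranspose,
    mem_unitaryGroup_iff'.mp hU, vecMul_one]

lemma diagonal_circle_mem_unitaryGroup {n : Type*} [Fintype n] [DecidableEq n] (z : n → Circle) :
    diagonal (fun i => (z i : ℂ)) ∈ unitaryGroup n ℂ := by
  rw [mem_unitaryGroup_iff, star_eq_conjTranspose, diagonal_conjTranspose, diagonal_mul_diagonal]
  simp only [Pi.star_apply, circle_mul_star, diagonal_one]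

lemma reflection_mem_unitaryGroup (θ : ℝ) :
    !![(Real.cos θ : ℂ), Real.sin θ; Real.sin θ, -Real.cos θ] ∈ unitaryGroup (Fin 2) ℂ := by
  have hcs : (Real.cos θ : ℂ) * Real.cos θ + Real.sin θ * Real.sin θ = 1 := by
    exact_mod_cast (by linarith [Real.cos_sq_add_sin_sq θ] :
      Real.cos θ * Real.cos θ + Real.sin θ * Real.sin θ = 1)
  have hstar : star !![(Real.cos θ : ℂ), Real.sin θ; Real.sin θ, -Real.cos θ]
      = !![(Real.cos θ : ℂ), Real.sin θ; Real.sin θ, -Real.cos θ] := by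
    ext i j
    fin_cases i <;> fin_cases j <;> simp [-Complex.ofReal_cos, -Complex.ofReal_sin]
  rw [mem_unitaryGroup_iff, hstar, mul_fin_two, one_fin_two, neg_mul_neg, hcs,
    add_comm (Complex.ofReal (Real.sin θ) * _) (Complex.ofReal (Real.cos θ) * _), hcs]
  ring_nf

lemma Rgate_eq_diagonal_mul_mul_diagonal (θ φ lam : ℝ) :
    Rgate θ φ lam = diagonal (fun i => (![Circle.exp φ, 1] i : ℂ)) *
      !![(Real.cos θ : ℂ), Real.sin θ; Real.sin θ, -Real.cos θ] *
        diagonal (fun i => (![Circle.exp lam, 1] i : ℂ)) := by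
  ext i j
  rw [mul_diagonal, diagonal_mul]
  fin_cases i <;> fin_cases j <;> simp [Rgate, mul_comm, mul_add, Complex.exp_add, mul_left_comm]

lemma Rgate_mem_unitaryGroup (θ φ lam : ℝ) : Rgate θ φ lam ∈ unitaryGroup (Fin 2) ℂ := by
  rw [Rgate_eq_diagonal_mul_mul_diagonal]
  exact mul_mem (mul_mem (diagonal_circle_mem_unitaryGroup _) (reflection_mem_unitaryGroup θ))
    (diagonal_circle_mem_unitaryGroup _)

lemma Rgate_zero_right (θ φ : ℝ) : Rgate θ φ 0 =
    !![Circle.exp φ * (Real.cos θ : ℂ), Circle.exp φ * (Real.sin θ : ℂ);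
       (Real.sin θ : ℂ), -(Real.cos θ : ℂ)] := by
  simp [Rgate, mul_comm I]

lemma Rgate_eq_mul_diagonal (θ φ lam : ℝ) :
    Rgate θ φ lam = Rgate θ φ 0 * diagonal ![(Circle.exp lam : ℂ), 1] := by
  ext i j
  rw [mul_diagonal]
  fin_cases i <;> fin_cases j <;> simp [Rgate, mul_comm, mul_add, Complex.exp_add, mul_left_comm]

lemma exists_eq_smul_col_Rgate (v : Fin 2 → ℂ) :
    ∃ (c : ℂ) (θ φ : ℝ), v = c • (Rgate θ φ 0).col 0 := by
  let r : ℂ := ⟨‖v 0‖, ‖v 1‖⟩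
  refine ⟨‖r‖ * Circle.exp (arg (v 1)), arg r, arg (v 0) - arg (v 1), ?_⟩
  have hpolar (u : ℂ) : u = ‖u‖ * Circle.exp (arg u) := (Complex.norm_mul_exp_arg_mul_I u).symm
  have hcos : (‖v 0‖ : ℂ) = ‖r‖ * (Real.cos (arg r) : ℂ) := by
    exact_mod_cast (Complex.norm_mul_cos_arg r).symm
  have hsin : (‖v 1‖ : ℂ) = ‖r‖ * (Real.sin (arg r) : ℂ) := by
    exact_mod_cast (Complex.norm_mul_sin_arg r).symm
  have hexp : (Circle.exp (arg (v 0)) : ℂ)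
      = Circle.exp (arg (v 1)) * Circle.exp (arg (v 0) - arg (v 1)) := by
    rw [← Circle.coe_mul, ← Circle.exp_add, add_sub_cancel]
  rw [Rgate_zero_right]
  ext i
  fin_cases i
  · refine (hpolar (v 0)).trans ?_
    rw [hcos, hexp]
    simp only [Fin.zero_eta, Pi.smul_apply, col_apply, of_apply, cons_val',
      cons_val_zero, smul_eq_mul]
    ring
  · refine (hpolar (v 1)).trans ?_
    rw [hsin]
    simp only [Fin.mk_one, Pi.smul_apply, col_apply, of_apply, cons_val',
      cons_val_zero, cons_val_one, smul_eq_mul]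
    ring

lemma exists_col_Rgate_eq {v : Fin 2 → ℂ} (hv : ∑ i, ‖v i‖ ^ 2 = 1) :
    ∃ θ φ lam : ℝ, (Rgate θ φ lam).col 0 = v := by
  obtain ⟨c, θ, φ, rfl⟩ := exists_eq_smul_col_Rgate v
  have hcol : c • (Rgate θ φ 0).col 0 = Rgate θ φ 0 *ᵥ Pi.single 0 c := by
    rw [mulVec_single, op_smul_eq_smul]
  have hc : ‖c‖ = 1 := by
    rw [hcol, sum_norm_sq_mulVec (Rgate_mem_unitaryGroup θ φ 0), Fin.sum_univ_two] at hv
    exact (pow_eq_one_iff_of_nonneg (norm_nonneg c) two_ne_zero).mp (by simpa using hv)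
  obtain ⟨lam, hlam⟩ := Circle.exp_surjective ⟨c, mem_sphere_zero_iff_norm.mpr hc⟩
  refine ⟨θ, φ, lam, ?_⟩
  rw [Rgate_eq_mul_diagonal, hlam, hcol]
  ext i
  simp [mul_diagonal]

lemma star_Rgate_zero_right_mulVec (θ φ : ℝ) (a : Fin 2 → ℂ) : star (Rgate θ φ 0) *ᵥ a =
    ![star (Circle.exp φ : ℂ) * Real.cos θ * a 0 + Real.sin θ * a 1,
      star (Circle.exp φ : ℂ) * Real.sin θ * a 0 - Real.cos θ * a 1] := by
  rw [Rgate_zero_right]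
  ext i
  fin_cases i <;> simp [mulVec, dotProduct, sub_eq_add_neg, -Circle.coe_exp, -Complex.ofReal_cos,
    -Complex.ofReal_sin]

lemma exists_star_Rgate_mulVec_eq_zero {a b : Fin 2 → ℂ} (hab : a ⬝ᵥ star b = 0) :
    ∃ θ φ : ℝ, (star (Rgate θ φ 0) *ᵥ a) 0 = 0 ∧ (star (Rgate θ φ 0) *ᵥ b) 1 = 0 := by
  -- A vector in the kernel of the matrix below is orthogonal to `a` and parallel to `b`.
  have hdet : (!![star (a 0), star (a 1); b 1, -b 0]).det = 0 := by
    have hba : b 0 * star (a 0) + b 1 * star (a 1) = 0 := by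
      rwa [dotProduct_star, star_eq_zero, dotProduct, Fin.sum_univ_two] at hab
    rw [det_fin_two_of]
    linear_combination -hba
  obtain ⟨v, hv0, hv⟩ := exists_mulVec_eq_zero_iff.mpr hdet
  obtain ⟨c, θ, φ, rfl⟩ := exists_eq_smul_col_Rgate v
  have hc : c ≠ 0 := left_ne_zero_of_smul hv0
  rw [mulVec_smul, smul_eq_zero_iff_right hc, Rgate_zero_right] at hv
  have horth : star (a 0) * (Circle.exp φ * Real.cos θ) + star (a 1) * Real.sin θ = 0 := by
    simpa [mulVec, dotProduct, -Circle.coe_exp, -Complex.ofReal_cos, -Complex.ofReal_sin]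
      using congrFun hv 0
  have hpar : b 1 * (Circle.exp φ * Real.cos θ) - b 0 * Real.sin θ = 0 := by
    simpa [mulVec, dotProduct, sub_eq_add_neg, -Circle.coe_exp, -Complex.ofReal_cos,
      -Complex.ofReal_sin] using congrFun hv 1
  refine ⟨θ, φ, ?_, ?_⟩ <;> rw [star_Rgate_zero_right_mulVec]
  · have hstar := congrArg star horth
    simp only [star_add, star_mul', star_zero, Complex.star_def, Complex.conj_ofReal,
      Complex.conj_conj] at hstar
    rw [cons_val_zero, Complex.star_def]
    linear_combination hstar
  · rw [cons_val_one, cons_val_zero]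
    linear_combination
      -star (Circle.exp φ : ℂ) * hpar + Real.cos θ * b 1 * circle_mul_star (Circle.exp φ)

end Gate

section PolynomialVector

lemma eval_map_C_mulVec {R m n : Type*} [CommSemiring R] [Fintype n] (A : Matrix m n R)
    (V : n → R[X]) (i : m) (z : R) :
    ((A.map C *ᵥ V) i).eval z = (A *ᵥ fun j => (V j).eval z) i := by
  simp [mulVec, dotProduct, eval_finsetSum]

lemma coeff_map_C_mulVec {R m n : Type*} [Semiring R] [Fintype n] (A : Matrix m n R)
    (V : n → R[X]) (i : m) (k : ℕ) :
    ((A.map C *ᵥ V) i).coeff k = (A *ᵥ fun j => (V j).coeff k) i := by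
  simp [mulVec, dotProduct]

lemma natDegree_map_C_mulVec_le {R m n : Type*} [Semiring R] [Fintype n] (A : Matrix m n R)
    {V : n → R[X]} {N : ℕ} (hV : ∀ j, (V j).natDegree ≤ N) (i : m) :
    ((A.map C *ᵥ V) i).natDegree ≤ N :=
  natDegree_sum_le_of_forall_le _ _ fun j _ => (natDegree_C_mul_le _ _).trans (hV j)

/-- The vector of polynomials `V` has Euclidean norm `1` at every point of the unit circle. -/
def IsNormalizedOnCircle {n : Type*} [Fintype n] (V : n → ℂ[X]) : Prop :=
  ∀ z : Circle, ∑ i, ‖(V i).eval (z : ℂ)‖ ^ 2 = 1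

lemma IsNormalizedOnCircle.sum_mul_conjReflect {n : Type*} [Fintype n] {V : n → ℂ[X]} {N : ℕ}
    (h : IsNormalizedOnCircle V) (hV : ∀ i, (V i).natDegree ≤ N) :
    ∑ i, V i * conjReflect N (V i) = X ^ N := by
  refine eq_of_eval_circle_eq fun z => ?_
  simp only [eval_finsetSum, eval_mul_conjReflect (hV _), ← Finset.mul_sum, ← Complex.ofReal_sum,
    h z, Complex.ofReal_one, mul_one, eval_pow, eval_X]

lemma IsNormalizedOnCircle.coeff_zero_dotProduct_star_coeff {n : Type*} [Fintype n]
    {V : n → ℂ[X]} {N : ℕ} (h : IsNormalizedOnCircle V) (hV : ∀ i, (V i).natDegree ≤ N)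
    (hN : N ≠ 0) : (fun i => (V i).coeff 0) ⬝ᵥ star (fun i => (V i).coeff N) = 0 := by
  have h0 := congrArg (coeff · 0) (h.sum_mul_conjReflect hV)
  simpa only [finsetSum_coeff, mul_coeff_zero, coeff_zero_conjReflect, coeff_X_pow, hN.symm,
    if_false, dotProduct, Pi.star_apply] using h0

end PolynomialVector

section Peeling

/-- The matrix product `(∏_{j=1}^{L} R(θ_j, φ_j, x)) · R(θ₀, φ₀, λ)` of the generalized quantum
signal processing protocol of length `L` at the signal `e^{ix}`. -/
noncomputable def gqspUnitary (L : ℕ) (θ φ : ℕ → ℝ) (lam x : ℝ) : Matrix (Fin 2) (Fin 2) ℂ :=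
  oprod L (fun j => Rgate (θ j) (φ j) x) * Rgate (θ 0) (φ 0) lam

lemma oprod_congr {L : ℕ} {M N : ℕ → Matrix (Fin 2) (Fin 2) ℂ}
    (h : ∀ j, j ≤ L → M j = N j) : oprod L M = oprod L N := by
  induction L with
  | zero => rfl
  | succ L ih => rw [oprod, oprod, h _ le_rfl, ih fun j hj => h j (hj.trans L.le_succ)]

lemma gqspUnitary_update_succ (L : ℕ) (θ φ : ℕ → ℝ) (t f lam x : ℝ) :
    gqspUnitary (L + 1) (Function.update θ (L + 1) t) (Function.update φ (L + 1) f) lam x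
      = Rgate t f x * gqspUnitary L θ φ lam x := by
  have hold (j : ℕ) (hj : j ≤ L) (α : ℕ → ℝ) (a : ℝ) : Function.update α (L + 1) a j = α j :=
    Function.update_of_ne (by omega) _ _
  rw [gqspUnitary, gqspUnitary, oprod, Matrix.mul_assoc, Function.update_self,
    Function.update_self, hold 0 L.zero_le, hold 0 L.zero_le,
    oprod_congr fun j hj => by rw [hold j hj, hold j hj]]

lemma IsNormalizedOnCircle.exists_eq_Rgate_mulVec {L : ℕ} {V : Fin 2 → ℂ[X]}
    (h : IsNormalizedOnCircle V) (hV : ∀ i, (V i).natDegree ≤ L + 1) :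
    ∃ (θ φ : ℝ) (V' : Fin 2 → ℂ[X]), (∀ i, (V' i).natDegree ≤ L) ∧ IsNormalizedOnCircle V' ∧
      ∀ x, (fun i => (V i).eval (Circle.exp x : ℂ))
        = Rgate θ φ x *ᵥ fun i => (V' i).eval (Circle.exp x : ℂ) := by
  obtain ⟨θ, φ, hlow, htop⟩ :=
    exists_star_Rgate_mulVec_eq_zero (h.coeff_zero_dotProduct_star_coeff hV L.succ_ne_zero)
  set U := (star (Rgate θ φ 0)).map C *ᵥ V with hU
  have hUdeg : ∀ i, (U i).natDegree ≤ L + 1 := natDegree_map_C_mulVec_le _ hV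
  have hU1 : (U 1).natDegree ≤ L :=
    natDegree_le_pred (hUdeg 1) (by rw [hU, coeff_map_C_mulVec, htop])
  obtain ⟨Q, hQ, hU0⟩ := exists_eq_X_sub_C_mul (w := 0) (hUdeg 0) <| by
    rw [IsRoot, ← coeff_zero_eq_eval_zero, hU, coeff_map_C_mulVec, hlow]
  have hpeel (x : ℝ) : (fun i => (V i).eval (Circle.exp x : ℂ))
      = Rgate θ φ x *ᵥ fun i => (![Q, U 1] i).eval (Circle.exp x : ℂ) := by
    have hdiag : (diagonal ![(Circle.exp x : ℂ), 1] *ᵥ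
        fun i => (![Q, U 1] i).eval (Circle.exp x : ℂ))
          = fun i => (U i).eval (Circle.exp x : ℂ) := by
      ext i
      rw [mulVec_diagonal]
      fin_cases i
      · simp [hU0]
      · simp
    rw [Rgate_eq_mul_diagonal, ← mulVec_mulVec, hdiag]
    simp_rw [hU, eval_map_C_mulVec]
    rw [mulVec_mulVec, mem_unitaryGroup_iff.mp (Rgate_mem_unitaryGroup θ φ 0), one_mulVec]
  refine ⟨θ, φ, ![Q, U 1], Fin.forall_fin_two.mpr ⟨hQ, hU1⟩, fun z => ?_, hpeel⟩
  obtain ⟨x, rfl⟩ := Circle.exp_surjective z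
  rw [← h (Circle.exp x), ← sum_norm_sq_mulVec (Rgate_mem_unitaryGroup θ φ x), ← hpeel]

theorem IsNormalizedOnCircle.exists_col_gqspUnitary_eq {L : ℕ} {V : Fin 2 → ℂ[X]}
    (h : IsNormalizedOnCircle V) (hV : ∀ i, (V i).natDegree ≤ L) :
    ∃ (θ φ : ℕ → ℝ) (lam : ℝ),
      ∀ x, (gqspUnitary L θ φ lam x).col 0 = fun i => (V i).eval (Circle.exp x : ℂ) := by
  induction L generalizing V with
  | zero =>
    obtain ⟨θ, φ, lam, hcol⟩ := exists_col_Rgate_eq (h 1)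
    refine ⟨fun _ => θ, fun _ => φ, lam, fun x => ?_⟩
    rw [gqspUnitary, oprod, Matrix.one_mul, hcol]
    ext i
    rw [eq_C_of_natDegree_le_zero (hV i), eval_C, eval_C]
  | succ L ih =>
    obtain ⟨t, f, V', hV', h', hpeel⟩ := h.exists_eq_Rgate_mulVec hV
    obtain ⟨θ, φ, lam, hcol⟩ := ih h' hV'
    refine ⟨Function.update θ (L + 1) t, Function.update φ (L + 1) f, lam, fun x => ?_⟩
    rw [hpeel, ← hcol, gqspUnitary_update_succ]
    rfl

end Peeling

/-- Generalized quantum signal processing: every polynomial `P` of degree at most `L` with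
`|P(e^{ix})| ≤ 1` appears, together with a complementary polynomial `Q`, as the first column of
`(∏_{j=1}^{L} R(θ_j, φ_j, x)) · R(θ₀, φ₀, λ)`. -/
theorem gqsp (L : ℕ) (P : Polynomial ℂ) (hdeg : P.degree ≤ (L : ℕ))
    (hP : ∀ x : ℝ, ‖P.eval (Complex.exp (I * (x : ℂ)))‖ ≤ 1) :
    ∃ (θ φ : ℕ → ℝ) (lam : ℝ) (Q : Polynomial ℂ),
      Q.degree ≤ (L : ℕ) ∧
      (∀ x : ℝ,
        ‖P.eval (Complex.exp (I * (x : ℂ)))‖ ^ 2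
          + ‖Q.eval (Complex.exp (I * (x : ℂ)))‖ ^ 2 = 1) ∧
      (∀ x : ℝ,
        (oprod L (fun j => Rgate (θ j) (φ j) x) * Rgate (θ 0) (φ 0) lam) 0 0
            = P.eval (Complex.exp (I * (x : ℂ))) ∧
        (oprod L (fun j => Rgate (θ j) (φ j) x) * Rgate (θ 0) (φ 0) lam) 1 0
            = Q.eval (Complex.exp (I * (x : ℂ)))) := by
  have hexp (x : ℝ) : Complex.exp (I * (x : ℂ)) = Circle.exp x := by
    rw [Circle.coe_exp, mul_comm]
  simp only [hexp] at hP ⊢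
  have hP' := natDegree_le_of_degree_le hdeg
  obtain ⟨Q, hQ, hPQ⟩ := exists_complementary hP' (Circle.exp_surjective.forall.mpr hP)
  have hnorm : IsNormalizedOnCircle ![P, Q] := fun z => (Fin.sum_univ_two _).trans (hPQ z)
  obtain ⟨θ, φ, lam, hcol⟩ :=
    hnorm.exists_col_gqspUnitary_eq (Fin.forall_fin_two.mpr ⟨hP', hQ⟩)
  exact ⟨θ, φ, lam, Q, degree_le_of_natDegree_le hQ, fun x => hPQ _,
    fun x => ⟨congrFun (hcol x) 0, congrFun (hcol x) 1⟩⟩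
end

section
/- Let w ∈ ℝ with w ∉ πℤ. Then for every n ∈ ℤ, (1/2)·∫₀² a_w(x)·e^{−i n π x} dx = −i·w·((−1)ⁿ e^{iw} − 1)/(w² − (nπ)²). -/
/-!
The function `a_w` is symmetric about `x = 1`, and that reflection turns `e^{-inπx}` into
`e^{inπx}`, so the coefficient is the cosine integral of `e^{iwx}` over `[0,1]`. Splitting the
cosine leaves two exponentials of frequencies `w ± nπ`, which both take the value `(-1)ⁿ e^{iw}` at
`x = 1`; hence the common numerator.
-/

open Complex

/-- One period (on `[0,2]`) of the 2-periodic function `a_w`, equal to `e^{iwx}` on `[0,1]`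
and to `e^{iw(2−x)}` on `(1,2)`. -/
noncomputable def aw (w : ℝ) (x : ℝ) : ℂ :=
  if x ≤ 1 then Complex.exp (I * (w : ℂ) * (x : ℂ))
  else Complex.exp (I * (w : ℂ) * ((2 : ℂ) - (x : ℂ)))

open intervalIntegral
open MeasureTheory (volume)

theorem integral_eq_integral_add_comp_two_mul_sub {E : Type*} [NormedAddCommGroup E]
    [NormedSpace ℝ E] {f : ℝ → E} {a c : ℝ} (hf : IntervalIntegrable f volume a (2 * c - a)) :
    ∫ x in a..(2 * c - a), f x = ∫ x in a..c, (f x + f (2 * c - x)) := by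
  have hc : c ∈ Set.uIcc a (2 * c - a) := by
    rcases le_total a c with h | h
    · exact Set.mem_uIcc.mpr (.inl ⟨h, by linarith⟩)
    · exact Set.mem_uIcc.mpr (.inr ⟨by linarith, h⟩)
  have hleft : IntervalIntegrable f volume a c :=
    hf.mono_set (Set.uIcc_subset_uIcc_left hc)
  have hright : IntervalIntegrable f volume c (2 * c - a) :=
    hf.mono_set (Set.uIcc_subset_uIcc_right hc)
  have hreflect : IntervalIntegrable (fun x ↦ f (2 * c - x)) volume a c := by
    simpa [two_mul] using (hright.comp_sub_left (2 * c)).symm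
  rw [integral_add hleft hreflect, integral_comp_sub_left f (2 * c), two_mul, add_sub_cancel_right,
    ← two_mul, integral_add_adjacent_intervals hleft hright]

theorem exp_neg_I_mul_int_mul_pi_mul_two_sub (n : ℤ) (z : ℂ) :
    exp (-I * n * Real.pi * (2 - z)) = exp (I * n * Real.pi * z) := by
  rw [← exp_periodic.int_mul n (-I * n * Real.pi * (2 - z))]
  congr 1
  ring

theorem integral_mul_exp_neg_eq_two_mul_integral_mul_cos {f : ℝ → ℂ}
    (hf : IntervalIntegrable f volume 0 2) (hsymm : ∀ x, f (2 - x) = f x) (n : ℤ) :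
    ∫ x in (0 : ℝ)..2, f x * exp (-I * n * Real.pi * x) =
      2 * ∫ x in (0 : ℝ)..1, f x * cos (n * Real.pi * x) := by
  have hint : IntervalIntegrable (fun x : ℝ ↦ f x * exp (-I * n * Real.pi * x)) volume 0 2 :=
    hf.mul_continuousOn (by fun_prop)
  have hfold := integral_eq_integral_add_comp_two_mul_sub
    (f := fun x : ℝ ↦ f x * exp (-I * n * Real.pi * x)) (a := 0) (c := 1)
    (by rwa [mul_one, sub_zero])
  simp only [mul_one, sub_zero] at hfold
  rw [hfold, ← integral_const_mul]
  refine integral_congr fun x _ ↦ ?_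
  simp only [hsymm, ofReal_sub, ofReal_ofNat, exp_neg_I_mul_int_mul_pi_mul_two_sub]
  rw [mul_left_comm, two_cos, ← mul_add, add_comm]
  ring_nf

theorem exp_I_mul_add_int_mul_pi (z : ℂ) (n : ℤ) :
    exp (I * (z + n * Real.pi)) = (-1) ^ n * exp (I * z) := by
  rw [← Int.cast_negOnePow, ← exp_antiperiodic.add_int_mul_eq n]
  congr 1
  ring

theorem integral_exp_I_mul_add_int_mul_pi {z : ℂ} {n : ℤ} (hz : z + n * Real.pi ≠ 0) :
    ∫ x in (0 : ℝ)..1, exp (I * (z + n * Real.pi) * x) =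
      ((-1) ^ n * exp (I * z) - 1) / (I * (z + n * Real.pi)) := by
  rw [integral_exp_mul_complex (mul_ne_zero I_ne_zero hz), ofReal_one, ofReal_zero, mul_one,
    mul_zero, exp_zero, exp_I_mul_add_int_mul_pi]

theorem integral_exp_I_mul_sub_int_mul_pi {z : ℂ} {n : ℤ} (hz : z - n * Real.pi ≠ 0) :
    ∫ x in (0 : ℝ)..1, exp (I * (z - n * Real.pi) * x) =
      ((-1) ^ n * exp (I * z) - 1) / (I * (z - n * Real.pi)) := by
  have hsign : (-1 : ℂ) ^ (-n) = (-1) ^ n := by rw [zpow_neg, ← inv_zpow, inv_neg_one]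
  have hneg := integral_exp_I_mul_add_int_mul_pi (z := z) (n := -n)
  simp only [Int.cast_neg, neg_mul, ← sub_eq_add_neg, hsign] at hneg
  exact hneg hz

theorem integral_exp_I_mul_mul_cos_int_mul_pi {z : ℂ} {n : ℤ}
    (hz : z ^ 2 ≠ (n * Real.pi) ^ 2) :
    ∫ x in (0 : ℝ)..1, exp (I * z * x) * cos (n * Real.pi * x) =
      -I * z * ((-1) ^ n * exp (I * z) - 1) / (z ^ 2 - (n * Real.pi) ^ 2) := by
  obtain ⟨hplus, hminus⟩ : z + n * Real.pi ≠ 0 ∧ z - n * Real.pi ≠ 0 := by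
    rwa [← mul_ne_zero_iff, ← sq_sub_sq, sub_ne_zero]
  have hsplit (x : ℝ) : exp (I * z * x) * cos (n * Real.pi * x) =
      (exp (I * (z + n * Real.pi) * x) + exp (I * (z - n * Real.pi) * x)) / 2 := by
    rw [cos, mul_div_assoc', mul_add, ← exp_add, ← exp_add]
    ring_nf
  simp only [hsplit]
  rw [integral_div, integral_add (Continuous.intervalIntegrable (by fun_prop) _ _)
      (Continuous.intervalIntegrable (by fun_prop) _ _),
    integral_exp_I_mul_add_int_mul_pi hplus, integral_exp_I_mul_sub_int_mul_pi hminus, sq_sub_sq]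
  field_simp
  rw [I_sq]
  ring

theorem aw_of_le_one (w : ℝ) {x : ℝ} (hx : x ≤ 1) : aw w x = exp (I * w * x) :=
  if_pos hx

theorem aw_two_sub (w x : ℝ) : aw w (2 - x) = aw w x := by
  rcases lt_trichotomy x 1 with hx | rfl | hx
  · simp [aw, hx.le, show ¬2 - x ≤ 1 by linarith]
  · norm_num
  · simp [aw, hx.not_ge, show 2 - x ≤ 1 by linarith]

theorem continuous_aw (w : ℝ) : Continuous (aw w) := by
  refine Continuous.if_le (by fun_prop) (by fun_prop) continuous_id continuous_const ?_
  rintro x rfl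
  norm_num

theorem fourier_coeff_aw_general (w : ℝ) (n : ℤ) (hw : w ^ 2 ≠ (n * Real.pi) ^ 2) :
    (1 / 2 : ℂ) * ∫ x in (0 : ℝ)..2, aw w x * exp (-I * n * Real.pi * x) =
      -I * w * ((-1) ^ n * exp (I * w) - 1) / (w ^ 2 - (n * Real.pi) ^ 2) := by
  have hcos : ∫ x in (0 : ℝ)..1, aw w x * cos (n * Real.pi * x) =
      ∫ x in (0 : ℝ)..1, exp (I * w * x) * cos (n * Real.pi * x) := by
    refine integral_congr fun x hx ↦ ?_
    rw [Set.uIcc_of_le zero_le_one] at hx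
    simp only [aw_of_le_one w hx.2]
  rw [integral_mul_exp_neg_eq_two_mul_integral_mul_cos
      ((continuous_aw w).intervalIntegrable _ _) (aw_two_sub w), hcos,
    integral_exp_I_mul_mul_cos_int_mul_pi (mod_cast hw), ← mul_assoc,
    one_div_mul_cancel two_ne_zero, one_mul]

/-- Fourier coefficients of the 2-periodic function `a_w`:
`(1/2)·∫₀² a_w(x)·e^{−inπx} dx = −i·w·((−1)ⁿ e^{iw} − 1)/(w² − (nπ)²)` for `w ∉ πℤ`. -/
theorem fourier_coeff_aw (w : ℝ) (hw : ∀ n : ℤ, w ≠ n * Real.pi) (n : ℤ) :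
    (1/2 : ℂ) * ∫ x in (0:ℝ)..2, aw w x * Complex.exp (-I * (n : ℂ) * (Real.pi : ℂ) * (x : ℂ))
      = -I * (w : ℂ) * ((-1 : ℂ) ^ n * Complex.exp (I * (w : ℂ)) - 1)
          / ((w : ℂ) ^ 2 - ((n : ℂ) * (Real.pi : ℂ)) ^ 2) := by
  refine fourier_coeff_aw_general w n fun h ↦ ?_
  exact (sq_eq_sq_iff_eq_or_eq_neg.mp h).elim (hw n) (by simpa using hw (-n))
end

section
/- Let w ∈ ℝ with 0 < |w| ≤ π/2 and let N ≥ 1 be a natural number. Then ∑_{n=N+1}^{∞} |c_n(w)| ≤ (2/π)·1/(N − 1/4). -/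
/-!
The numerator `(−1)ⁿ e^{iw} − 1` has modulus at most `2`, so for `|w| < nπ`
`|c_n(w)| ≤ 2|w| / ((nπ)² − w²) = 1/(nπ − |w|) − 1/(nπ + |w|)`.
For `|w| ≤ π` this is at most `1/((n − 1)π) − 1/((n + 1)π)`, which telescopes with step two: the
tail from `N + 1` is at most `1/(Nπ) + 1/((N + 1)π) ≤ 2/((N − 1/4)π)`.
-/

open Complex

/-- The Fourier coefficients `c_n(w) = −i·w·((−1)ⁿ e^{iw} − 1)/(w² − (nπ)²)` of the 2-periodic
function equal to `e^{iwx}` on `[0,1]` and to `e^{iw(2−x)}` on `(1,2)`. -/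
noncomputable def cc (w : ℝ) (n : ℤ) : ℂ :=
  -I * (w : ℂ) * ((-1 : ℂ) ^ n * Complex.exp (I * (w : ℂ)) - 1)
    / ((w : ℂ) ^ 2 - ((n : ℂ) * (Real.pi : ℂ)) ^ 2)

open Filter Topology

theorem sum_range_sub_add {G : Type*} [AddCommGroup G] (f : ℕ → G) (m n : ℕ) :
    ∑ k ∈ Finset.range n, (f k - f (k + m)) =
      ∑ i ∈ Finset.range m, f i - ∑ i ∈ Finset.range m, f (n + i) := by
  have hsplit : ∑ k ∈ Finset.range n, f k + ∑ i ∈ Finset.range m, f (n + i) =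
      ∑ i ∈ Finset.range m, f i + ∑ k ∈ Finset.range n, f (m + k) := by
    rw [← Finset.sum_range_add, ← Finset.sum_range_add, add_comm n m]
  simp only [Finset.sum_sub_distrib, add_comm _ m]
  rw [sub_eq_sub_iff_add_eq_add, hsplit]

theorem hasSum_sub_add_of_antitone {f : ℕ → ℝ} {l : ℝ} (hf : Antitone f)
    (hlim : Tendsto f atTop (𝓝 l)) (m : ℕ) :
    HasSum (fun k ↦ f k - f (k + m)) (∑ i ∈ Finset.range m, f i - m * l) := by
  have hnonneg : ∀ k, 0 ≤ f k - f (k + m) := fun k ↦ sub_nonneg.2 (hf (k.le_add_right m))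
  rw [hasSum_iff_tendsto_nat_of_nonneg hnonneg]
  have hrest : Tendsto (fun n ↦ ∑ i ∈ Finset.range m, f (n + i)) atTop (𝓝 (m * l)) := by
    simpa only [Finset.sum_const, Finset.card_range, nsmul_eq_mul] using
      tendsto_finsetSum (Finset.range m) fun i _ ↦ (tendsto_add_atTop_iff_nat i).2 hlim
  simpa only [sum_range_sub_add] using hrest.const_sub (∑ i ∈ Finset.range m, f i)

theorem hasSum_one_div_add_mul_sub {x c : ℝ} (hx : 0 < x) (hc : 0 < c) (m : ℕ) :
    HasSum (fun k : ℕ ↦ 1 / ((x + k) * c) - 1 / ((x + (k + m : ℕ)) * c))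
      (∑ i ∈ Finset.range m, 1 / ((x + i) * c)) := by
  have hanti : Antitone fun k : ℕ ↦ 1 / ((x + k) * c) := fun i j hij ↦ by
    dsimp only
    gcongr
  have hden : Tendsto (fun k : ℕ ↦ (x + k) * c) atTop atTop :=
    (tendsto_const_nhds.add_atTop tendsto_natCast_atTop_atTop).atTop_mul_const hc
  simpa only [mul_zero, sub_zero] using hasSum_sub_add_of_antitone hanti (hden.const_div_atTop 1) m

theorem norm_neg_one_zpow_mul_exp_sub_one_le (w : ℝ) (n : ℤ) :
    ‖(-1 : ℂ) ^ n * exp (I * w) - 1‖ ≤ 2 := by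
  calc ‖(-1 : ℂ) ^ n * exp (I * w) - 1‖
      ≤ ‖(-1 : ℂ) ^ n * exp (I * w)‖ + ‖(1 : ℂ)‖ := norm_sub_le _ _
    _ = 2 := by
      rw [norm_mul, norm_zpow, norm_neg, norm_one, one_zpow, norm_exp_I_mul_ofReal]
      norm_num

theorem norm_cc_le {w : ℝ} {n : ℤ} (hw : |w| < n * Real.pi) :
    ‖cc w n‖ ≤ 1 / (n * Real.pi - |w|) - 1 / (n * Real.pi + |w|) := by
  have hsub : 0 < n * Real.pi - |w| := sub_pos.2 hw
  have hadd : 0 < n * Real.pi + |w| := by linarith [abs_nonneg w]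
  have hden : ‖(w : ℂ) ^ 2 - ((n : ℂ) * (Real.pi : ℂ)) ^ 2‖ =
      (n * Real.pi - |w|) * (n * Real.pi + |w|) := by
    have hfactor : w ^ 2 - (n * Real.pi) ^ 2 =
        -((n * Real.pi - |w|) * (n * Real.pi + |w|)) := by
      rw [← sq_abs w]
      ring
    rw [← abs_of_pos (mul_pos hsub hadd), ← abs_neg, ← hfactor, ← Real.norm_eq_abs, ← norm_real]
    push_cast
    rfl
  calc ‖cc w n‖
      = |w| * ‖(-1 : ℂ) ^ n * exp (I * w) - 1‖ /
          ((n * Real.pi - |w|) * (n * Real.pi + |w|)) := by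
        rw [cc, norm_div, hden, norm_mul, norm_mul, norm_neg, norm_I, one_mul, norm_real,
          Real.norm_eq_abs]
    _ ≤ |w| * 2 / ((n * Real.pi - |w|) * (n * Real.pi + |w|)) := by
        gcongr
        exact norm_neg_one_zpow_mul_exp_sub_one_le w n
    _ = 1 / (n * Real.pi - |w|) - 1 / (n * Real.pi + |w|) := by
        rw [div_sub_div _ _ hsub.ne' hadd.ne']
        ring

theorem norm_cc_le_of_abs_le_pi {w : ℝ} (hw : |w| ≤ Real.pi) {n : ℤ} (hn : 1 < n) :
    ‖cc w n‖ ≤ 1 / ((n - 1) * Real.pi) - 1 / ((n + 1) * Real.pi) := by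
  have hpi := Real.pi_pos
  have hn' : (1 : ℝ) < n := mod_cast hn
  have hpos : 0 < (n - 1) * Real.pi := mul_pos (sub_pos.2 hn') hpi
  have hlt : |w| < n * Real.pi := by linarith
  have hadd : 0 < n * Real.pi + |w| := by linarith [abs_nonneg w]
  refine (norm_cc_le hlt).trans (sub_le_sub ?_ ?_)
  · exact one_div_le_one_div_of_le hpos (by linarith)
  · exact one_div_le_one_div_of_le hadd (by linarith)

theorem cc_tail_bound_general {w : ℝ} (hw : |w| ≤ Real.pi) {N : ℕ} (hN : 1 ≤ N) :
    Summable (fun k : ℕ ↦ ‖cc w ((N : ℤ) + 1 + (k : ℤ))‖) ∧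
      ∑' k : ℕ, ‖cc w ((N : ℤ) + 1 + (k : ℤ))‖ ≤ (2 / Real.pi) * (1 / ((N : ℝ) - 1/4)) := by
  have hpi := Real.pi_pos
  have hN' : (1 : ℝ) ≤ N := mod_cast hN
  have hterm (k : ℕ) : ‖cc w ((N : ℤ) + 1 + (k : ℤ))‖ ≤
      1 / ((N + k) * Real.pi) - 1 / ((N + (k + 2 : ℕ)) * Real.pi) := by
    convert norm_cc_le_of_abs_le_pi hw (n := (N : ℤ) + 1 + k) (by lia) using 4 <;>
      push_cast <;> ring
  have hsum := hasSum_one_div_add_mul_sub (by linarith : (0 : ℝ) < N) hpi 2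
  have hsummable := hsum.summable.of_nonneg_of_le (fun _ ↦ norm_nonneg _) hterm
  refine ⟨hsummable, ?_⟩
  calc ∑' k : ℕ, ‖cc w ((N : ℤ) + 1 + (k : ℤ))‖
      ≤ ∑ i ∈ Finset.range 2, 1 / ((N + i) * Real.pi) :=
        hasSum_le hterm hsummable.hasSum hsum
    _ ≤ ∑ i ∈ Finset.range 2, 1 / ((N - 1 / 4) * Real.pi) := by
        gcongr with i
        · exact mul_pos (by linarith) hpi
        · linarith [i.cast_nonneg (α := ℝ)]
    _ = (2 / Real.pi) * (1 / ((N : ℝ) - 1/4)) := by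
        rw [Finset.sum_const, Finset.card_range, nsmul_eq_mul, one_div, mul_inv]
        ring

/-- Tail bound: for `0 < |w| ≤ π/2` and `N ≥ 1`,
`∑_{n=N+1}^{∞} |c_n(w)| ≤ (2/π)·1/(N − 1/4)`. -/
theorem cc_tail_bound (w : ℝ) (hw0 : 0 < |w|) (hw : |w| ≤ Real.pi / 2)
    (N : ℕ) (hN : 1 ≤ N) :
    ∑' k : ℕ, ‖cc w ((N : ℤ) + 1 + (k : ℤ))‖ ≤ (2 / Real.pi) * (1 / ((N : ℝ) - 1/4)) :=
  (cc_tail_bound_general (hw.trans (half_le_self Real.pi_pos.le)) hN).2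
end

section
/- There exists a constant C > 0 such that for every natural number N ≥ 2 and every w ∈ ℝ with 0 < |w| ≤ π/2, one has sup_{x ∈ [0,1]} |P_{N,w}(x) − e^{iwx}| ≤ C·(log N)/N. -/
/-!
The coefficient `c_n(w)` is the `n`-th Fourier coefficient of the continuous 2-periodic function
equal to `e^{iw|x|}` on `[-1, 1]`, so `|c_n(w)| ≤ 1`. Feeding this back into
`(nπ)² c_n = w² c_n + iw((-1)ⁿ e^{iw} - 1)` gives `|c_n(w)| ≤ |w|(|w| + 2) / (nπ)²`, with no loss
when `w` is close to a multiple of `π`. Hence the Fourier series converges absolutely to `e^{iwx}`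
on `[0, 1]`, and its symmetric partial sums `S_k` approach the limit at rate `1 / (k + 1)`.
The Cesàro mean is the average of `S_0, …, S_N`; averaging these rates produces a harmonic sum,
which is where `log N / N` comes from.
-/

open Complex

/-- The `N`-th Cesàro mean `P_{N,w}(x) = ∑_{n=−N}^{N} ((N+1−|n|)/(N+1))·c_n(w)·e^{inπx}`. -/
noncomputable def cesaro (N : ℕ) (w : ℝ) (x : ℝ) : ℂ :=
  ∑ n ∈ Finset.Icc (-(N : ℤ)) (N : ℤ),
    ((((N : ℝ) + 1 - |(n : ℝ)|) / ((N : ℝ) + 1) : ℝ) : ℂ) * cc w n *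
      Complex.exp (I * (n : ℂ) * (Real.pi : ℂ) * (x : ℂ))

open Filter MeasureTheory
open scoped Real Topology

section SymmetricPartialSums

/-- The symmetric partial sum `∑_{|n| ≤ k} f n` of a series indexed by `ℤ`, the notion of partial
sum appropriate for Fourier series. -/
noncomputable def symmPartialSum {E : Type*} [AddCommMonoid E] (f : ℤ → E) (k : ℕ) : E :=
  ∑ n ∈ Finset.Icc (-(k : ℤ)) k, f n

lemma symmPartialSum_succ {E : Type*} [AddCommGroup E] (f : ℤ → E) (k : ℕ) :
    symmPartialSum f (k + 1) = symmPartialSum f k + (f (-((k : ℤ) + 1)) + f (k + 1)) := by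
  rw [symmPartialSum, Nat.cast_succ, Finset.sum_Icc_succ_eq_add_endpoints, symmPartialSum]
  abel

lemma sum_range_symmPartialSum {E : Type*} [AddCommGroup E] (f : ℤ → E) (N : ℕ) :
    ∑ k ∈ Finset.range (N + 1), symmPartialSum f k =
      symmPartialSum (fun n => ((N : ℤ) + 1 - |n|) • f n) N := by
  induction N with
  | zero => simp [symmPartialSum]
  | succ N ih =>
    -- The weights `N + 1 - |n|` vanish at `n = ±(N + 1)`.
    have extend : symmPartialSum (fun n => ((N : ℤ) + 1 - |n|) • f n) N =
        symmPartialSum (fun n => ((N : ℤ) + 1 - |n|) • f n) (N + 1) := by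
      have habs : |(N : ℤ) + 1| = N + 1 := abs_of_nonneg (by positivity)
      rw [symmPartialSum_succ, abs_neg, habs, sub_self, zero_smul, zero_smul, add_zero, add_zero]
    rw [Finset.sum_range_succ, ih, extend, symmPartialSum, symmPartialSum, symmPartialSum,
      ← Finset.sum_add_distrib]
    refine Finset.sum_congr rfl fun n _ => ?_
    push_cast
    module

lemma tendsto_symmPartialSum {E : Type*} [AddCommMonoid E] [TopologicalSpace E]
    {f : ℤ → E} {a : E} (hf : HasSum f a) : Tendsto (symmPartialSum f) atTop (𝓝 a) :=
  hf.comp Finset.tendsto_Icc_neg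

end SymmetricPartialSums

section Rates

lemma dist_le_of_dist_succ_le_div_sq {α : Type*} [PseudoMetricSpace α] {u : ℕ → α} {a : α} {K : ℝ}
    (hu : ∀ k : ℕ, dist (u k) (u (k + 1)) ≤ K / ((k : ℝ) + 1) ^ 2)
    (ha : Tendsto u atTop (𝓝 a)) (k : ℕ) : dist (u k) a ≤ 2 * K / (k + 1) := by
  have hK : 0 ≤ K := by simpa using dist_nonneg.trans (hu 0)
  refine le_of_tendsto (tendsto_const_nhds.dist ha) (eventually_atTop.2 ⟨k, fun M hM => ?_⟩)
  calc dist (u k) (u M) ≤ ∑ i ∈ Finset.Ico k M, K / ((i : ℝ) + 1) ^ 2 :=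
        dist_le_Ico_sum_of_dist_le hM fun _ _ => hu _
    _ = K * ∑ i ∈ Finset.Ico (k + 1) (M + 1), ((i : ℝ) ^ 2)⁻¹ := by
        rw [← Finset.sum_Ico_add', Finset.mul_sum]
        simp [div_eq_mul_inv]
    _ = K * ∑ i ∈ Finset.Ioo k (M + 1), ((i : ℝ) ^ 2)⁻¹ := rfl
    _ ≤ K * (2 / (k + 1)) := by gcongr; exact sum_Ioo_inv_sq_le k (M + 1)
    _ = 2 * K / (k + 1) := by ring

lemma norm_average_sub_le {E : Type*} [SeminormedAddCommGroup E] [NormedSpace ℝ E]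
    {u : ℕ → E} {a : E} {K : ℝ} (hu : ∀ k : ℕ, ‖u k - a‖ ≤ K / (k + 1)) {n : ℕ} (hn : n ≠ 0) :
    ‖(n : ℝ)⁻¹ • ∑ k ∈ Finset.range n, u k - a‖ ≤ K * (1 + Real.log n) / n := by
  have hK : 0 ≤ K := by simpa using (norm_nonneg _).trans (hu 0)
  have harmonic_le : ∑ k ∈ Finset.range n, ((k : ℝ) + 1)⁻¹ ≤ 1 + Real.log n := by
    simpa [harmonic] using harmonic_le_one_add_log n
  have error_eq : (n : ℝ)⁻¹ • ∑ k ∈ Finset.range n, u k - a =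
      (n : ℝ)⁻¹ • ∑ k ∈ Finset.range n, (u k - a) := by
    have hn' : (n : ℝ) ≠ 0 := Nat.cast_ne_zero.2 hn
    rw [Finset.sum_sub_distrib, Finset.sum_const, Finset.card_range, smul_sub,
      ← Nat.cast_smul_eq_nsmul ℝ, inv_smul_smul₀ hn']
  calc ‖(n : ℝ)⁻¹ • ∑ k ∈ Finset.range n, u k - a‖
      = (n : ℝ)⁻¹ * ‖∑ k ∈ Finset.range n, (u k - a)‖ := by
        rw [error_eq, norm_smul, norm_inv, Real.norm_natCast]
    _ ≤ (n : ℝ)⁻¹ * ∑ k ∈ Finset.range n, K / ((k : ℝ) + 1) := by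
        gcongr
        exact norm_sum_le_of_le _ fun k _ => hu k
    _ = (n : ℝ)⁻¹ * (K * ∑ k ∈ Finset.range n, ((k : ℝ) + 1)⁻¹) := by
        simp only [div_eq_mul_inv, Finset.mul_sum]
    _ ≤ (n : ℝ)⁻¹ * (K * (1 + Real.log n)) := by gcongr
    _ = K * (1 + Real.log n) / n := by ring

lemma norm_symmPartialSum_sub_le {E : Type*} [SeminormedAddCommGroup E] {f : ℤ → E} {a : E}
    {K : ℝ} (hf : ∀ n : ℤ, n ≠ 0 → ‖f n‖ ≤ K / (n : ℝ) ^ 2) (hsum : HasSum f a) (k : ℕ) :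
    ‖symmPartialSum f k - a‖ ≤ 4 * K / (k + 1) := by
  have dist_succ_le (k : ℕ) :
      dist (symmPartialSum f k) (symmPartialSum f (k + 1)) ≤ 2 * K / ((k : ℝ) + 1) ^ 2 := by
    have hneg : ‖f (-((k : ℤ) + 1))‖ ≤ K / ((k : ℝ) + 1) ^ 2 := by
      simpa only [Int.cast_neg, neg_sq, Int.cast_add, Int.cast_natCast, Int.cast_one] using
        hf (-((k : ℤ) + 1)) (by lia)
    have hpos : ‖f ((k : ℤ) + 1)‖ ≤ K / ((k : ℝ) + 1) ^ 2 := by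
      simpa only [Int.cast_add, Int.cast_natCast, Int.cast_one] using hf ((k : ℤ) + 1) (by lia)
    rw [symmPartialSum_succ, dist_self_add_right, two_mul, add_div]
    exact norm_add_le_of_le hneg hpos
  rw [← dist_eq_norm]
  exact (dist_le_of_dist_succ_le_div_sq dist_succ_le (tendsto_symmPartialSum hsum) k).trans_eq
    (by ring)

lemma one_add_log_succ_div_succ_le {N : ℕ} (hN : 2 ≤ N) :
    (1 + Real.log (N + 1)) / (N + 1) ≤ 4 * Real.log N / N := by
  have hN' : (2 : ℝ) ≤ N := by exact_mod_cast hN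
  have log_succ_le : Real.log (N + 1) ≤ 2 * Real.log N := by
    rw [← Real.log_rpow (by positivity), Real.rpow_two]
    exact Real.log_le_log (by positivity) (by nlinarith)
  have half_le_log : 1 / 2 ≤ Real.log N := by
    linarith [Real.log_two_gt_d9, Real.log_le_log two_pos hN']
  gcongr <;> linarith

end Rates

section EvenExtension

lemma integral_neg_self_eq_integral_add_comp_neg {E : Type*} [NormedAddCommGroup E]
    [NormedSpace ℝ E] {f : ℝ → E} {a : ℝ} (hf : IntervalIntegrable f volume (-a) a) :
    ∫ x in (-a)..a, f x = ∫ x in (0 : ℝ)..a, (f x + f (-x)) := by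
  have hzero : (0 : ℝ) ∈ Set.uIcc (-a) a := by
    rcases le_total 0 a with h | h <;> simp [h]
  have hleft : IntervalIntegrable f volume (-a) 0 := hf.mono_set (Set.uIcc_subset_uIcc_left hzero)
  have hright : IntervalIntegrable f volume 0 a := hf.mono_set (Set.uIcc_subset_uIcc_right hzero)
  have hreflect : IntervalIntegrable (fun x => f (-x)) volume 0 a :=
    (IntervalIntegrable.iff_comp_neg).2 (by simpa using hleft.symm)
  rw [intervalIntegral.integral_add hright hreflect, intervalIntegral.integral_comp_neg, neg_zero,
    add_comm, intervalIntegral.integral_add_adjacent_intervals hleft hright]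

/-- The even `T`-periodic extension of a function given on `[0, T / 2]`, as a function on the circle
of length `T`. Its Fourier series is the cosine series of `g`. -/
noncomputable def evenExt (T : ℝ) [Fact (0 < T)] (g : ℝ → ℂ) : AddCircle T → ℂ :=
  AddCircle.liftIoc T (-(T / 2)) fun x => g |x|

variable {T : ℝ} [hT : Fact (0 < T)] {g : ℝ → ℂ}

lemma evenExt_coe {x : ℝ} (hx : |x| ≤ T / 2) : evenExt T g x = g |x| := by
  obtain ⟨hlower, hupper⟩ := abs_le.1 hx
  rcases hlower.eq_or_lt with rfl | hlt
  · have hend : -(T / 2) + T = T / 2 := by ring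
    have hmem : T / 2 ∈ Set.Ioc (-(T / 2)) (-(T / 2) + T) := by
      simpa [hend] using hT.out
    rw [← AddCircle.coe_add_period, hend, evenExt, AddCircle.liftIoc_coe_apply hmem, abs_neg]
  · exact AddCircle.liftIoc_coe_apply ⟨hlt, by linarith⟩

lemma continuous_evenExt (hg : ContinuousOn g (Set.Icc 0 (T / 2))) : Continuous (evenExt T g) := by
  have hend : -(T / 2) + T = T / 2 := by ring
  refine AddCircle.liftIoc_continuous (by simp [hend]) ?_
  rw [hend]
  exact hg.comp continuous_abs.continuousOn fun _ hx => ⟨abs_nonneg _, abs_le.2 hx⟩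

lemma fourier_neg_smul_evenExt_add_comp_neg (n : ℤ) {x : ℝ} (hx : x ∈ Set.Icc 0 (T / 2)) :
    fourier (-n) (x : AddCircle T) • evenExt T g x +
        fourier (-n) ((-x : ℝ) : AddCircle T) • evenExt T g ((-x : ℝ) : AddCircle T) =
      (2 : ℝ) • Real.cos (2 * π * n * x / T) • g x := by
  have habs : |x| = x := abs_of_nonneg hx.1
  rw [evenExt_coe (by rw [habs]; exact hx.2), evenExt_coe (by rw [abs_neg, habs]; exact hx.2),
    abs_neg, habs, fourier_coe_apply, fourier_coe_apply, ← add_smul, smul_eq_mul, real_smul,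
    real_smul, ← mul_assoc, ofReal_cos, ofReal_ofNat, two_cos, add_comm]
  push_cast
  ring_nf

lemma fourierCoeff_evenExt (hg : ContinuousOn g (Set.Icc 0 (T / 2))) (n : ℤ) :
    fourierCoeff (evenExt T g) n =
      (2 / T) • ∫ x in (0 : ℝ)..(T / 2), Real.cos (2 * π * n * x / T) • g x := by
  have hcont : Continuous fun x : ℝ => fourier (-n) (x : AddCircle T) • evenExt T g x := by
    have hmk : Continuous fun x : ℝ => (x : AddCircle T) := AddCircle.continuous_mk' T
    exact ((fourier (-n)).continuous.comp hmk).smul ((continuous_evenExt hg).comp hmk)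
  have fold (x : ℝ) (hx : x ∈ Set.uIcc 0 (T / 2)) :=
    fourier_neg_smul_evenExt_add_comp_neg (g := g) n
      (Set.uIcc_of_le (half_pos hT.out).le ▸ hx)
  rw [fourierCoeff_eq_intervalIntegral _ n (-(T / 2)), show -(T / 2) + T = T / 2 by ring,
    integral_neg_self_eq_integral_add_comp_neg (hcont.intervalIntegrable _ _),
    intervalIntegral.integral_congr fold, intervalIntegral.integral_smul, smul_smul,
    one_div_mul_eq_div]

lemma hasSum_fourier_evenExt (hg : ContinuousOn g (Set.Icc 0 (T / 2)))
    (hsum : Summable (fourierCoeff (evenExt T g))) {x : ℝ} (hx : |x| ≤ T / 2) :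
    HasSum (fun n : ℤ => fourierCoeff (evenExt T g) n • fourier n (x : AddCircle T)) (g |x|) := by
  let f : C(AddCircle T, ℂ) := ⟨evenExt T g, continuous_evenExt hg⟩
  rw [← evenExt_coe (g := g) hx]
  exact has_pointwise_sum_fourier_series_of_summable (f := f) hsum (x : AddCircle T)

end EvenExtension

section Coefficients

variable {w : ℝ}

lemma sq_ne_int_mul_pi_sq (hpos : 0 < |w|) (hlt : |w| < π) (n : ℤ) : w ^ 2 ≠ (n * π) ^ 2 := by
  rw [Ne, sq_eq_sq_iff_abs_eq_abs, abs_mul, abs_of_pos Real.pi_pos]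
  rcases eq_or_ne n 0 with rfl | hn
  · simpa using hpos
  · have hn : (1 : ℝ) ≤ |(n : ℝ)| := by exact_mod_cast Int.one_le_abs hn
    nlinarith

lemma cc_eq_integral {n : ℤ} (hw : w ^ 2 ≠ (n * π) ^ 2) :
    cc w n = ∫ x in (0 : ℝ)..1, Real.cos (n * π * x) • Complex.exp (I * w * x) := by
  have hprod : ((w : ℂ) + n * π) * (w - n * π) ≠ 0 := by
    rw [← sq_sub_sq]
    exact sub_ne_zero.2 (by exact_mod_cast hw)
  have hplus := left_ne_zero_of_mul hprod
  have hminus := right_ne_zero_of_mul hprod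
  have integrand_eq (x : ℝ) : Real.cos (n * π * x) • Complex.exp (I * w * x) =
      (Complex.exp (I * (w + n * π) * x) + Complex.exp (I * (w - n * π) * x)) / 2 := by
    rw [real_smul, ofReal_cos, Complex.cos, div_mul_eq_mul_div, add_mul, ← Complex.exp_add,
      ← Complex.exp_add]
    push_cast
    ring_nf
  have integrable (c : ℂ) : IntervalIntegrable (fun x : ℝ => Complex.exp (c * x)) volume 0 1 :=
    Continuous.intervalIntegrable (by fun_prop) 0 1
  simp_rw [integrand_eq]
  rw [intervalIntegral.integral_div, intervalIntegral.integral_add (integrable _) (integrable _),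
    integral_exp_mul_complex (mul_ne_zero I_ne_zero hplus),
    integral_exp_mul_complex (mul_ne_zero I_ne_zero hminus), cc, sq_sub_sq]
  simp only [ofReal_one, mul_one, ofReal_zero, mul_zero, Complex.exp_zero]
  rw [mul_comm I (w + n * π : ℂ), mul_comm I (w - n * π : ℂ),
    exp_mul_I_antiperiodic.add_int_mul_eq, exp_mul_I_antiperiodic.sub_int_mul_eq,
    Int.cast_negOnePow]
  field_simp
  rw [I_sq]
  ring

lemma norm_cc_le_one {n : ℤ} (hw : w ^ 2 ≠ (n * π) ^ 2) : ‖cc w n‖ ≤ 1 := by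
  have integrand_le (x : ℝ) : ‖Real.cos (n * π * x) • Complex.exp (I * w * x)‖ ≤ 1 := by
    rw [norm_smul, Real.norm_eq_abs, mul_assoc I, ← ofReal_mul, norm_exp_I_mul_ofReal, mul_one]
    exact Real.abs_cos_le_one _
  rw [cc_eq_integral hw]
  simpa using intervalIntegral.norm_integral_le_of_norm_le_const (a := 0) (b := 1)
    fun x _ => integrand_le x

lemma norm_cc_le_div_sq {n : ℤ} (hw : w ^ 2 ≠ (n * π) ^ 2) (hn : n ≠ 0) :
    ‖cc w n‖ ≤ |w| * (|w| + 2) / π ^ 2 / (n : ℝ) ^ 2 := by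
  have hden : (w : ℂ) ^ 2 - (n * π) ^ 2 ≠ 0 := sub_ne_zero.2 (by exact_mod_cast hw)
  have sq_mul_cc_eq : (n * π) ^ 2 * cc w n =
      w ^ 2 * cc w n + I * w * ((-1) ^ n * Complex.exp (I * w) - 1) := by
    rw [cc, ← sub_eq_iff_eq_add', ← sub_mul, mul_div_assoc', div_eq_iff hden]
    ring
  have endpoint_le : ‖(-1 : ℂ) ^ n * Complex.exp (I * w) - 1‖ ≤ 2 := by
    refine (norm_sub_le _ _).trans_eq ?_
    rw [norm_mul, norm_zpow, norm_neg, norm_one, one_zpow, norm_exp_I_mul_ofReal]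
    norm_num
  have key : (n * π) ^ 2 * ‖cc w n‖ ≤ |w| * (|w| + 2) :=
    calc (n * π) ^ 2 * ‖cc w n‖ = ‖((n : ℂ) * π) ^ 2 * cc w n‖ := by simp [mul_pow]
      _ ≤ ‖(w : ℂ) ^ 2 * cc w n‖ + ‖I * w * ((-1) ^ n * Complex.exp (I * w) - 1)‖ := by
        rw [sq_mul_cc_eq]
        exact norm_add_le _ _
      _ = |w| ^ 2 * ‖cc w n‖ + |w| * ‖(-1 : ℂ) ^ n * Complex.exp (I * w) - 1‖ := by simp
      _ ≤ |w| ^ 2 * 1 + |w| * 2 := by gcongr; exact norm_cc_le_one hw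
      _ = |w| * (|w| + 2) := by ring
  rw [div_div, le_div_iff₀' (by positivity)]
  linarith [mul_pow (n : ℝ) π 2]

lemma fourierCoeff_evenExt_exp [Fact ((0 : ℝ) < 2)] {n : ℤ} (hw : w ^ 2 ≠ (n * π) ^ 2) :
    fourierCoeff (evenExt 2 fun x => Complex.exp (I * w * x)) n = cc w n := by
  rw [fourierCoeff_evenExt (by fun_prop), cc_eq_integral hw, div_self two_ne_zero, one_smul]
  congr! 4 with x
  ring

lemma hasSum_cc_mul_exp (hw : ∀ n : ℤ, w ^ 2 ≠ (n * π) ^ 2) {x : ℝ}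
    (hx : x ∈ Set.Icc (0 : ℝ) 1) :
    HasSum (fun n : ℤ => cc w n * Complex.exp (I * n * π * x)) (Complex.exp (I * w * x)) := by
  have : Fact ((0 : ℝ) < 2) := ⟨two_pos⟩
  have hsum : Summable (fourierCoeff (evenExt 2 fun x => Complex.exp (I * w * x))) := by
    refine .of_norm_bounded_eventually
      ((Real.summable_one_div_int_pow.2 one_lt_two).mul_left (|w| * (|w| + 2) / π ^ 2)) ?_
    filter_upwards [(Set.finite_singleton (0 : ℤ)).compl_mem_cofinite] with n hn
    rw [fourierCoeff_evenExt_exp (hw n), mul_one_div]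
    exact norm_cc_le_div_sq (hw n) hn
  have hx' : |x| ≤ 2 / 2 := by rw [abs_of_nonneg hx.1]; linarith [hx.2]
  have h := hasSum_fourier_evenExt (by fun_prop) hsum hx'
  rw [abs_of_nonneg hx.1] at h
  refine h.congr_fun fun n => ?_
  rw [fourierCoeff_evenExt_exp (hw n), smul_eq_mul, fourier_coe_apply]
  push_cast
  ring_nf

end Coefficients

lemma cesaro_eq_average (N : ℕ) (w x : ℝ) :
    cesaro N w x = (((N + 1 : ℕ) : ℝ)⁻¹) • ∑ k ∈ Finset.range (N + 1),
      symmPartialSum (fun n : ℤ => cc w n * Complex.exp (I * n * π * x)) k := by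
  rw [sum_range_symmPartialSum, cesaro, symmPartialSum, Finset.smul_sum]
  refine Finset.sum_congr rfl fun n _ => ?_
  have habs : ((|n| : ℤ) : ℂ) = ((|(n : ℝ)| : ℝ) : ℂ) := by rw [← Int.cast_abs, ofReal_intCast]
  rw [real_smul, zsmul_eq_mul]
  push_cast
  rw [habs]
  ring

theorem cesaro_error_rate_general {N : ℕ} (hN : 2 ≤ N) {w : ℝ}
    (hw : ∀ n : ℤ, w ^ 2 ≠ (n * π) ^ 2) {x : ℝ} (hx : x ∈ Set.Icc (0 : ℝ) 1) :
    ‖cesaro N w x - Complex.exp (I * w * x)‖ ≤ 2 * |w| * (|w| + 2) * Real.log N / N := by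
  set K := |w| * (|w| + 2) / π ^ 2
  have term_le (n : ℤ) (hn : n ≠ 0) :
      ‖cc w n * Complex.exp (I * n * π * x)‖ ≤ K / (n : ℝ) ^ 2 := by
    have hexp : I * n * π * x = I * ((n * π * x : ℝ) : ℂ) := by push_cast; ring
    rw [norm_mul, hexp, norm_exp_I_mul_ofReal, mul_one]
    exact norm_cc_le_div_sq (hw n) hn
  have hK : 8 * K ≤ |w| * (|w| + 2) := by
    have hpi : 8 ≤ π ^ 2 := by nlinarith [Real.pi_gt_three]
    rw [← mul_div_assoc, div_le_iff₀' (by positivity)]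
    gcongr
  rw [cesaro_eq_average]
  calc _ ≤ 4 * K * (1 + Real.log ((N + 1 : ℕ) : ℝ)) / ((N + 1 : ℕ) : ℝ) :=
        norm_average_sub_le (norm_symmPartialSum_sub_le term_le (hasSum_cc_mul_exp hw hx))
          N.succ_ne_zero
    _ ≤ 4 * K * (4 * Real.log N / N) := by
        rw [mul_div_assoc, Nat.cast_succ]
        exact mul_le_mul_of_nonneg_left (one_add_log_succ_div_succ_le hN) (by positivity)
    _ = 2 * (8 * K) * Real.log N / N := by ring
    _ ≤ 2 * (|w| * (|w| + 2)) * Real.log N / N := by gcongr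
    _ = 2 * |w| * (|w| + 2) * Real.log N / N := by ring

/-- Convergence rate of the Cesàro means: there is a constant `C > 0` such that for all `N ≥ 2`
and all `w` with `0 < |w| ≤ π/2`, `sup_{x∈[0,1]} |P_{N,w}(x) − e^{iwx}| ≤ C·(log N)/N`. -/
theorem cesaro_error_rate :
    ∃ C : ℝ, 0 < C ∧
      ∀ (N : ℕ), 2 ≤ N →
        ∀ (w : ℝ), 0 < |w| → |w| ≤ Real.pi / 2 →
          ∀ x ∈ Set.Icc (0:ℝ) 1,
            ‖cesaro N w x - Complex.exp (I * (w : ℂ) * (x : ℂ))‖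
              ≤ C * Real.log (N : ℝ) / (N : ℝ) := by
  refine ⟨16, by norm_num, fun N hN w hpos hle x hx => ?_⟩
  have hlt : |w| < π := by linarith [Real.pi_pos]
  have hle_two : |w| ≤ 2 := by linarith [Real.pi_le_four]
  refine (cesaro_error_rate_general hN (sq_ne_int_mul_pi_sq hpos hlt) hx).trans ?_
  gcongr
  nlinarith
end

section
/- Let P, Q, z ∈ ℂ with |P|² + |Q|² = 1 and |z| = 1, and set M = [[P, −conj(Q)], [Q, conj(P)]] and D = [[z, 0], [0, conj(z)]]. Then ‖M − D‖_F = √2·√(|z − P|² + |Q|²), and moreover ‖M − D‖_F ≤ √2·√(|z − P|² + 2|z − P|); in particular, if |z − P| ≤ 1 then ‖M − D‖_F ≤ √(6·|z − P|). -/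
/-!
`M - D` has the same shape `[[a, -b̄], [b, ā]]` as `M`, with `a = P - z` and `b = Q`, so its rows
have the same norm and `‖M - D‖_F² = 2 (|z - P|² + |Q|²)`. The off-diagonal entry is controlled by
the diagonal one: `|Q|² = 1 - |P|² ≤ 2 (1 - |P|) ≤ 2 |z - P|`, as `|z| = 1`.
-/

open Complex Matrix

/-- Frobenius norm `‖A‖_F = √(Tr(AᴴA)) = √(∑ |A i j|²)`. -/
noncomputable def frobNorm {n : Type*} [Fintype n] (A : Matrix n n ℂ) : ℝ :=
  Real.sqrt (∑ i, ∑ j, ‖A i j‖ ^ 2)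

theorem sq_sub_norm_sq_le_of_le_norm {E : Type*} [SeminormedAddGroup E] {r : ℝ} {x : E}
    (hr : 0 ≤ r) (hx : r ≤ ‖x‖) (y : E) : r ^ 2 - ‖y‖ ^ 2 ≤ 2 * r * ‖x - y‖ := by
  have reverse_triangle : r - ‖y‖ ≤ ‖x - y‖ :=
    sub_le_iff_le_add.2 (hx.trans (norm_le_norm_sub_add x y))
  calc r ^ 2 - ‖y‖ ^ 2 = 2 * r * (r - ‖y‖) - (r - ‖y‖) ^ 2 := by ring
    _ ≤ 2 * r * (r - ‖y‖) := sub_le_self _ (sq_nonneg _)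
    _ ≤ 2 * r * ‖x - y‖ := by gcongr

theorem frobNorm_conj_pair (a b : ℂ) :
    frobNorm !![a, -(starRingEnd ℂ) b; b, (starRingEnd ℂ) a] =
      Real.sqrt 2 * Real.sqrt (‖a‖ ^ 2 + ‖b‖ ^ 2) := by
  rw [frobNorm, ← Real.sqrt_mul zero_le_two]
  congr 1
  simp only [Fin.sum_univ_two, of_apply, cons_val_zero, cons_val_one, norm_neg, norm_conj]
  ring

theorem frobNorm_conj_pair_sub_diag (P Q z : ℂ) :
    frobNorm (!![P, -(starRingEnd ℂ) Q; Q, (starRingEnd ℂ) P] - !![z, 0; 0, (starRingEnd ℂ) z]) =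
      Real.sqrt 2 * Real.sqrt (‖z - P‖ ^ 2 + ‖Q‖ ^ 2) := by
  have sub_eq : !![P, -(starRingEnd ℂ) Q; Q, (starRingEnd ℂ) P] -
      !![z, 0; 0, (starRingEnd ℂ) z] =
        !![P - z, -(starRingEnd ℂ) Q; Q, (starRingEnd ℂ) (P - z)] := by
    simp
  rw [sub_eq, frobNorm_conj_pair, norm_sub_rev]

theorem sqrt_two_mul_sqrt_sq_add_two_mul_le {t : ℝ} (h0 : 0 ≤ t) (h1 : t ≤ 1) :
    Real.sqrt 2 * Real.sqrt (t ^ 2 + 2 * t) ≤ Real.sqrt (6 * t) := by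
  have sq_le : t ^ 2 ≤ t := pow_le_of_le_one h0 h1 two_ne_zero
  rw [← Real.sqrt_mul zero_le_two]
  exact Real.sqrt_le_sqrt (by linarith)

theorem frob_dist_unitary_general (P Q z : ℂ) (h : ‖P‖ ^ 2 + ‖Q‖ ^ 2 ≤ 1) (hz : 1 ≤ ‖z‖) :
    frobNorm (!![P, -(starRingEnd ℂ) Q; Q, (starRingEnd ℂ) P] - !![z, 0; 0, (starRingEnd ℂ) z])
        = Real.sqrt 2 * Real.sqrt (‖z - P‖ ^ 2 + ‖Q‖ ^ 2) ∧
    frobNorm (!![P, -(starRingEnd ℂ) Q; Q, (starRingEnd ℂ) P] - !![z, 0; 0, (starRingEnd ℂ) z])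
        ≤ Real.sqrt 2 * Real.sqrt (‖z - P‖ ^ 2 + 2 * ‖z - P‖) ∧
    (‖z - P‖ ≤ 1 →
      frobNorm (!![P, -(starRingEnd ℂ) Q; Q, (starRingEnd ℂ) P] - !![z, 0; 0, (starRingEnd ℂ) z])
        ≤ Real.sqrt (6 * ‖z - P‖)) := by
  have norm_Q_sq_le : ‖Q‖ ^ 2 ≤ 2 * ‖z - P‖ := by
    linarith [sq_sub_norm_sq_le_of_le_norm zero_le_one hz P]
  have dist_le : Real.sqrt 2 * Real.sqrt (‖z - P‖ ^ 2 + ‖Q‖ ^ 2) ≤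
      Real.sqrt 2 * Real.sqrt (‖z - P‖ ^ 2 + 2 * ‖z - P‖) := by
    gcongr
  rw [frobNorm_conj_pair_sub_diag]
  exact ⟨rfl, dist_le, fun h1 =>
    dist_le.trans (sqrt_two_mul_sqrt_sq_add_two_mul_le (norm_nonneg _) h1)⟩

/-- Frobenius-norm distance between a unitary `[[P, −Q̄],[Q, P̄]]` (with `|P|²+|Q|²=1`) and the
diagonal unitary `[[z,0],[0,z̄]]` (with `|z|=1`): exact value, upper bound, and the simplified
bound `√(6|z−P|)` when `|z−P| ≤ 1`. -/
theorem frob_dist_unitary (P Q z : ℂ) (h : ‖P‖ ^ 2 + ‖Q‖ ^ 2 = 1) (hz : ‖z‖ = 1) :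
    frobNorm (!![P, -(starRingEnd ℂ) Q; Q, (starRingEnd ℂ) P] - !![z, 0; 0, (starRingEnd ℂ) z])
        = Real.sqrt 2 * Real.sqrt (‖z - P‖ ^ 2 + ‖Q‖ ^ 2) ∧
    frobNorm (!![P, -(starRingEnd ℂ) Q; Q, (starRingEnd ℂ) P] - !![z, 0; 0, (starRingEnd ℂ) z])
        ≤ Real.sqrt 2 * Real.sqrt (‖z - P‖ ^ 2 + 2 * ‖z - P‖) ∧
    (‖z - P‖ ≤ 1 →
      frobNorm (!![P, -(starRingEnd ℂ) Q; Q, (starRingEnd ℂ) P] - !![z, 0; 0, (starRingEnd ℂ) z])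
        ≤ Real.sqrt (6 * ‖z - P‖)) :=
  frob_dist_unitary_general P Q z h.le hz.ge
end

section
/- For every m ≥ 1, L ∈ ℕ, coefficients γ ∈ ℂ^L, weights W ∈ ℝ^{L×m} with entries w_{j,k}, and every ε > 0, there exist N ∈ ℕ and complex coefficients c_{j,k,n} (for 1 ≤ j ≤ L, 1 ≤ k ≤ m, −N ≤ n ≤ N) such that, setting P_{j,k}(t) = ∑_{n=−N}^{N} c_{j,k,n} e^{i n π t}, each P_{j,k} satisfies sup_{t ∈ [0,1]} |P_{j,k}(t)| ≤ 1 and sup_{x ∈ [0,1]^m} | ∑_{j=1}^{L} γ_j ∏_{k=1}^{m} e^{i w_{j,k} x_k} − ∑_{j=1}^{L} γ_j ∏_{k=1}^{m} P_{j,k}(x_k) | ≤ ε. -/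
open Complex

/-!
A continuous function `f` on `[0, 1]` extends to the continuous even function `θ ↦ f ‖θ‖` on the
circle `ℝ/2ℤ`, whose characters are `t ↦ e^{inπt}`. The span of the characters is uniformly dense.
A dense set is also dense in every closed ball, which is the closure of an open set, so a function
of norm at most `1` is a uniform limit of trigonometric polynomials that are themselves of norm at
most `1`. On the unit ball a product is `1`-Lipschitz in each of its factors, so the errors made in
the individual factors add up.
-/

open Filter Finset

section Density

theorem closedBall_subset_closure_closedBall_inter {E : Type*} [SeminormedAddCommGroup E]
    [NormedSpace ℝ E] {s : Set E} (hs : Dense s) (x : E) {r : ℝ} (hr : r ≠ 0) :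
    Metric.closedBall x r ⊆ closure (Metric.closedBall x r ∩ s) :=
  calc
    Metric.closedBall x r = closure (Metric.ball x r) := (closure_ball x hr).symm
    _ ⊆ closure (Metric.ball x r ∩ s) :=
      closure_minimal (hs.open_subset_closure_inter Metric.isOpen_ball) isClosed_closure
    _ ⊆ closure (Metric.closedBall x r ∩ s) := by gcongr; exact Metric.ball_subset_closedBall

theorem eventually_exists_sum_smul_eq_of_mem_span_range {ι R M : Type*} [Semiring R]
    [AddCommMonoid M] [Module R M] {v : ι → M} {x : M} (hx : x ∈ Submodule.span R (Set.range v)) :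
    ∀ᶠ s : Finset ι in atTop, ∃ c : ι → R, ∑ i ∈ s, c i • v i = x := by
  obtain ⟨c, rfl⟩ := Finsupp.mem_span_range_iff_exists_finsupp.1 hx
  filter_upwards [eventually_ge_atTop c.support] with s hs
  exact ⟨c, (c.sum_of_support_subset hs (fun i a => a • v i) fun i _ => zero_smul R (v i)).symm⟩

end Density

section Circle

variable {T : ℝ} [hT : Fact (0 < T)]

theorem addCircle_norm_mem_Icc (θ : AddCircle T) : ‖θ‖ ∈ Set.Icc 0 (T / 2) :=
  ⟨norm_nonneg θ, by
    simpa only [abs_of_pos hT.out] using AddCircle.norm_le_half_period T (x := θ) hT.out.ne'⟩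

theorem addCircle_norm_coe_of_mem_Icc {t : ℝ} (ht : t ∈ Set.Icc 0 (T / 2)) :
    ‖(t : AddCircle T)‖ = t := by
  rw [(AddCircle.norm_coe_eq_abs_iff T hT.out.ne').2, abs_of_nonneg ht.1]
  rw [abs_of_nonneg ht.1, abs_of_pos hT.out]
  exact ht.2

/-- The even `T`-periodic extension of a function on the half period `[0, T / 2]`, as a function on
`AddCircle T`. The norm on the circle is the distance to the nearest multiple of `T`, so it folds
the circle onto the half period. -/
noncomputable def evenPeriodicExtension {E : Type*} [TopologicalSpace E] (f : ℝ → E)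
    (hf : ContinuousOn f (Set.Icc 0 (T / 2))) : C(AddCircle T, E) where
  toFun θ := f ‖θ‖
  continuous_toFun := hf.comp_continuous continuous_norm addCircle_norm_mem_Icc

theorem evenPeriodicExtension_coe {E : Type*} [TopologicalSpace E] {f : ℝ → E}
    (hf : ContinuousOn f (Set.Icc 0 (T / 2))) {t : ℝ} (ht : t ∈ Set.Icc 0 (T / 2)) :
    evenPeriodicExtension f hf (t : AddCircle T) = f t :=
  congrArg f (addCircle_norm_coe_of_mem_Icc ht)

theorem norm_evenPeriodicExtension_le {E : Type*} [SeminormedAddCommGroup E] {f : ℝ → E}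
    (hf : ContinuousOn f (Set.Icc 0 (T / 2))) {r : ℝ}
    (hr : ∀ t ∈ Set.Icc 0 (T / 2), ‖f t‖ ≤ r) : ‖evenPeriodicExtension f hf‖ ≤ r :=
  (ContinuousMap.norm_le_of_nonempty _).2 fun θ => hr ‖θ‖ (addCircle_norm_mem_Icc θ)

theorem eventually_exists_sum_fourier_norm_le_dist_lt (f : C(AddCircle T, ℂ)) {r : ℝ} (hr : r ≠ 0)
    (hf : ‖f‖ ≤ r) {ε : ℝ} (hε : 0 < ε) :
    ∀ᶠ s : Finset ℤ in atTop, ∃ c : ℤ → ℂ,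
      ‖∑ n ∈ s, c n • fourier (T := T) n‖ ≤ r ∧
        dist f (∑ n ∈ s, c n • fourier (T := T) n) < ε := by
  have fourier_dense : Dense (Submodule.span ℂ (Set.range (@fourier T)) : Set C(AddCircle T, ℂ)) :=
    Submodule.dense_iff_topologicalClosure_eq_top.2 span_fourier_closure_eq_top
  have f_mem_closure := closedBall_subset_closure_closedBall_inter fourier_dense 0 hr
    (mem_closedBall_zero_iff.2 hf)
  obtain ⟨p, ⟨hpr, hp_span⟩, hfp⟩ := Metric.mem_closure_iff.1 f_mem_closure ε hε
  filter_upwards [eventually_exists_sum_smul_eq_of_mem_span_range hp_span] with s ⟨c, hc⟩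
  exact ⟨c, hc ▸ mem_closedBall_zero_iff.1 hpr, hc ▸ hfp⟩

theorem eventually_exists_sum_fourier_norm_le_norm_sub_le_on_Icc {f : ℝ → ℂ}
    (hf : ContinuousOn f (Set.Icc 0 (T / 2))) {r : ℝ} (hr : r ≠ 0)
    (hfr : ∀ t ∈ Set.Icc 0 (T / 2), ‖f t‖ ≤ r) {ε : ℝ} (hε : 0 < ε) :
    ∀ᶠ s : Finset ℤ in atTop, ∃ c : ℤ → ℂ, ∀ t ∈ Set.Icc 0 (T / 2),
      ‖∑ n ∈ s, c n * fourier n (t : AddCircle T)‖ ≤ r ∧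
        ‖f t - ∑ n ∈ s, c n * fourier n (t : AddCircle T)‖ ≤ ε := by
  filter_upwards [eventually_exists_sum_fourier_norm_le_dist_lt (evenPeriodicExtension f hf) hr
    (norm_evenPeriodicExtension_le hf hfr) hε] with s ⟨c, hcr, hcε⟩
  refine ⟨c, fun t ht => ?_⟩
  have eval_sum : (∑ n ∈ s, c n • fourier n) (t : AddCircle T) =
      ∑ n ∈ s, c n * fourier n (t : AddCircle T) := by
    simp only [ContinuousMap.sum_apply, ContinuousMap.smul_apply, smul_eq_mul]
  rw [← eval_sum, ← evenPeriodicExtension_coe hf ht, ← dist_eq_norm]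
  exact ⟨(ContinuousMap.norm_coe_le_norm _ _).trans hcr,
    (ContinuousMap.dist_apply_le_dist _).trans hcε.le⟩

end Circle

theorem fourier_two_coe_apply (n : ℤ) (t : ℝ) :
    fourier n (t : AddCircle (2 : ℝ)) = exp (I * n * Real.pi * t) := by
  rw [fourier_coe_apply]
  congr 1
  push_cast
  ring

section Product

variable {R κ : Type*} [SeminormedCommRing R] [NormOneClass R]

theorem norm_prod_sub_prod_le_sum_norm_sub {s : Finset κ} {a b : κ → R}
    (ha : ∀ k ∈ s, ‖a k‖ ≤ 1) (hb : ∀ k ∈ s, ‖b k‖ ≤ 1) :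
    ‖∏ k ∈ s, a k - ∏ k ∈ s, b k‖ ≤ ∑ k ∈ s, ‖a k - b k‖ := by
  induction s using Finset.cons_induction with
  | empty => simp
  | cons k s hk ih =>
    rw [forall_mem_cons] at ha hb
    rw [prod_cons, prod_cons, sum_cons]
    have norm_prod_le_one : ‖∏ i ∈ s, b i‖ ≤ 1 := by
      simpa using (Submonoid.unitClosedBall R).prod_mem (by simpa using hb.2)
    calc
      ‖a k * ∏ i ∈ s, a i - b k * ∏ i ∈ s, b i‖
      _ = ‖(a k - b k) * ∏ i ∈ s, b i + a k * (∏ i ∈ s, a i - ∏ i ∈ s, b i)‖ := by ring_nf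
      _ ≤ ‖a k - b k‖ * ‖∏ i ∈ s, b i‖ + ‖a k‖ * ‖∏ i ∈ s, a i - ∏ i ∈ s, b i‖ :=
        norm_add_le_of_le (norm_mul_le _ _) (norm_mul_le _ _)
      _ ≤ ‖a k - b k‖ + ∑ i ∈ s, ‖a i - b i‖ :=
        add_le_add (mul_le_of_le_one_right (norm_nonneg _) norm_prod_le_one)
          ((mul_le_of_le_one_left (norm_nonneg _) ha.1).trans (ih ha.2 hb.2))

theorem norm_sum_mul_prod_sub_sum_mul_prod_le {ι : Type*} [Fintype ι] [Fintype κ] (γ : ι → R)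
    {a b : ι → κ → R} (ha : ∀ j k, ‖a j k‖ ≤ 1) (hb : ∀ j k, ‖b j k‖ ≤ 1) {η : ℝ}
    (hab : ∀ j k, ‖a j k - b j k‖ ≤ η) :
    ‖∑ j, γ j * ∏ k, a j k - ∑ j, γ j * ∏ k, b j k‖ ≤ (∑ j, ‖γ j‖) * (Fintype.card κ * η) := by
  rw [← sum_sub_distrib, sum_mul]
  refine norm_sum_le_of_le _ fun j _ => ?_
  calc
    ‖γ j * ∏ k, a j k - γ j * ∏ k, b j k‖
    _ ≤ ‖γ j‖ * ‖∏ k, a j k - ∏ k, b j k‖ := by rw [← mul_sub]; exact norm_mul_le _ _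
    _ ≤ ‖γ j‖ * ∑ k, ‖a j k - b j k‖ := by
      gcongr
      exact norm_prod_sub_prod_le_sum_norm_sub (fun k _ => ha j k) fun k _ => hb j k
    _ ≤ ‖γ j‖ * (Fintype.card κ * η) := by
      gcongr
      simpa using sum_le_card_nsmul univ _ η fun k _ => hab j k

end Product

theorem discrete_weight_approx_general {ι κ : Type*} [Fintype ι] [Fintype κ] (γ : ι → ℂ)
    {f : ι → κ → ℝ → ℂ} (hf : ∀ j k, ContinuousOn (f j k) (Set.Icc 0 1))
    (hf_le : ∀ j k, ∀ t ∈ Set.Icc (0 : ℝ) 1, ‖f j k t‖ ≤ 1) {ε : ℝ} (hε : 0 < ε) :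
    ∃ (N : ℕ) (c : ι → κ → ℤ → ℂ),
      (∀ j k, ∀ t ∈ Set.Icc (0 : ℝ) 1,
        ‖∑ n ∈ Icc (-(N : ℤ)) N, c j k n * exp (I * n * Real.pi * t)‖ ≤ 1) ∧
      ∀ x ∈ Set.Icc (0 : κ → ℝ) 1,
        ‖∑ j, γ j * ∏ k, f j k (x k) - ∑ j, γ j * ∏ k,
          ∑ n ∈ Icc (-(N : ℤ)) N, c j k n * exp (I * n * Real.pi * x k)‖ ≤ ε := by
  have : Fact ((0 : ℝ) < 2) := ⟨two_pos⟩
  obtain ⟨η, hη, hηε⟩ := exists_pos_mul_lt hε ((∑ j, ‖γ j‖) * Fintype.card κ)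
  have factor_approx : ∀ j k, ∀ᶠ s : Finset ℤ in atTop, ∃ c : ℤ → ℂ, ∀ t ∈ Set.Icc (0 : ℝ) 1,
      ‖∑ n ∈ s, c n * exp (I * n * Real.pi * t)‖ ≤ 1 ∧
        ‖f j k t - ∑ n ∈ s, c n * exp (I * n * Real.pi * t)‖ ≤ η := fun j k => by
    simpa only [fourier_two_coe_apply, div_self (two_ne_zero' ℝ)] using
      eventually_exists_sum_fourier_norm_le_norm_sub_le_on_Icc (T := 2) (f := f j k)
        (by simpa using hf j k) one_ne_zero (by simpa using hf_le j k) hη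
  obtain ⟨N, hN⟩ := (tendsto_Icc_neg.eventually
    (eventually_all.2 fun j => eventually_all.2 (factor_approx j))).exists
  choose c hc using hN
  refine ⟨N, c, fun j k t ht => (hc j k t ht).1, fun x hx => ?_⟩
  have hx_mem : ∀ k, x k ∈ Set.Icc (0 : ℝ) 1 := fun k => ⟨hx.1 k, hx.2 k⟩
  refine (norm_sum_mul_prod_sub_sum_mul_prod_le γ (fun j k => hf_le j k _ (hx_mem k))
    (fun j k => (hc j k _ (hx_mem k)).1) fun j k => (hc j k _ (hx_mem k)).2).trans ?_
  rw [← mul_assoc]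
  exact hηε.le

/-- Products of complex exponentials `∏_k e^{i w_{j,k} x_k}` with tunable real weights can be
approximated, uniformly on `[0,1]^m`, by products of univariate trigonometric polynomials
`P_{j,k}(t) = ∑_{n=−N}^{N} c_{j,k,n} e^{inπt}` each bounded by `1` on `[0,1]`. -/
theorem discrete_weight_approx (m : ℕ) (hm : 1 ≤ m) (L : ℕ) (γ : Fin L → ℂ)
    (W : Fin L → Fin m → ℝ) (ε : ℝ) (hε : 0 < ε) :
    ∃ (N : ℕ) (c : Fin L → Fin m → ℤ → ℂ),
      (∀ (j : Fin L) (k : Fin m), ∀ t ∈ Set.Icc (0:ℝ) 1,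
        ‖∑ n ∈ Finset.Icc (-(N : ℤ)) (N : ℤ),
            c j k n * Complex.exp (I * (n : ℂ) * (Real.pi : ℂ) * (t : ℂ))‖ ≤ 1) ∧
      ∀ x ∈ Set.Icc (0 : Fin m → ℝ) 1,
        ‖∑ j : Fin L, γ j * ∏ k : Fin m, Complex.exp (I * (W j k : ℂ) * (x k : ℂ))
          - ∑ j : Fin L, γ j * ∏ k : Fin m,
              (∑ n ∈ Finset.Icc (-(N : ℤ)) (N : ℤ),
                c j k n * Complex.exp (I * (n : ℂ) * (Real.pi : ℂ) * (x k : ℂ)))‖ ≤ ε :=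
  discrete_weight_approx_general γ (f := fun j k t => exp (I * W j k * t))
    (fun j k => by fun_prop) (fun j k t _ => by simp [norm_exp]) hε
end

section
/- For every m ≥ 1, every continuous function f : [0,1]^m → ℂ, and every ε > 0, there exist L ∈ ℕ, real numbers α_1, …, α_L, φ_1, …, φ_L ∈ ℝ, and vectors w_1, …, w_L ∈ ℝ^m such that sup_{x ∈ [0,1]^m} | f(x) − ∑_{n=1}^{L} α_n e^{i (w_n·x + φ_n)} | ≤ ε. -/
open Complex

/-!
The complex combinations of the characters `x ↦ e^{i⟨x, w⟩}` form a star algebra: a product of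
characters is a character, and the conjugate of the character of `w` is the character of `-w`.
After rescaling `w`, some character separates any two given points, so by Stone–Weierstrass this
algebra is uniformly dense on compact sets. The polar form `c = |c| e^{i arg c}` turns the complex
coefficients into real amplitudes and phases.
-/

theorem exists_mem_starSubalgebra_near_of_isCompact_of_separatesPoints
    {𝕜 X : Type*} [RCLike 𝕜] [TopologicalSpace X] {A : StarSubalgebra 𝕜 C(X, 𝕜)}
    (hA : A.SeparatesPoints) {K : Set X} (hK : IsCompact K) {f : X → 𝕜} (hf : ContinuousOn f K)
    {ε : ℝ} (hε : 0 < ε) : ∃ g ∈ A, ∀ x ∈ K, ‖f x - g x‖ < ε := by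
  have : CompactSpace K := isCompact_iff_compactSpace.mp hK
  let restriction : C(X, 𝕜) →⋆ₐ[𝕜] C(K, 𝕜) :=
    ContinuousMap.compStarAlgHom' 𝕜 𝕜 ⟨Subtype.val, continuous_subtype_val⟩
  have separates : (A.map restriction).SeparatesPoints := by
    intro x y hxy
    obtain ⟨_, ⟨g, hg, rfl⟩, hgxy⟩ := hA (Subtype.coe_injective.ne hxy)
    exact ⟨_, ⟨restriction g, ⟨g, hg, rfl⟩, rfl⟩, hgxy⟩
  let fK : C(K, 𝕜) := ⟨K.domRestrict f, hf.domRestrict⟩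
  have mem_closure : fK ∈ (A.map restriction).topologicalClosure := by
    rw [ContinuousMap.starSubalgebra_topologicalClosure_eq_top_of_separatesPoints _ separates]
    exact StarSubalgebra.mem_top
  obtain ⟨_, ⟨g, hg, rfl⟩, near⟩ := Metric.mem_closure_iff.mp mem_closure ε hε
  refine ⟨g, hg, fun x hx => ?_⟩
  rw [← dist_eq_norm]
  exact (ContinuousMap.dist_apply_le_dist (f := fK) ⟨x, hx⟩).trans_lt near

lemma mul_exp_I_eq_norm_mul_exp_I_add_arg (c : ℂ) (t : ℝ) :
    c * exp (I * t) = ‖c‖ * exp (I * ((t + c.arg : ℝ) : ℂ)) := by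
  calc c * exp (I * t) = ‖c‖ * exp (c.arg * I) * exp (I * t) := by rw [norm_mul_exp_arg_mul_I]
    _ = ‖c‖ * exp (I * ((t + c.arg : ℝ) : ℂ)) := by
      rw [mul_assoc, ← exp_add, ofReal_add]
      ring_nf

section Pairing

variable {V W : Type*} [AddCommGroup V] [Module ℝ V] [TopologicalSpace V]
  [AddCommGroup W] [Module ℝ W]

theorem exists_mem_charPoly_near_of_isCompact [TopologicalSpace W] {e : AddChar ℝ Circle}
    (he : Continuous e) (he_ne_one : e ≠ 1) {B : V →ₗ[ℝ] W →ₗ[ℝ] ℝ}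
    (hB : Continuous fun p : V × W => B p.1 p.2) (hB_sep : B.SeparatingLeft)
    {K : Set V} (hK : IsCompact K) {f : V → ℂ} (hf : ContinuousOn f K) {ε : ℝ} (hε : 0 < ε) :
    ∃ p ∈ BoundedContinuousFunction.charPoly he hB, ∀ x ∈ K, ‖f x - p x‖ < ε := by
  have B_ne_zero : ∀ v ≠ 0, B v ≠ 0 := fun v hv hBv =>
    hv (LinearMap.separatingLeft_iff_linear_nontrivial.mp hB_sep v hBv)
  obtain ⟨_, ⟨p, hp, rfl⟩, near⟩ :=
    exists_mem_starSubalgebra_near_of_isCompact_of_separatesPoints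
      (BoundedContinuousFunction.separatesPoints_charPoly he he_ne_one hB B_ne_zero) hK hf hε
  exact ⟨p, hp, near⟩

lemma exists_eq_sum_amplitude_phase_of_mem_charPoly [TopologicalSpace W]
    {B : V →ₗ[ℝ] W →ₗ[ℝ] ℝ} {hB : Continuous fun p : V × W => B p.1 p.2}
    {p : BoundedContinuousFunction V ℂ}
    (hp : p ∈ BoundedContinuousFunction.charPoly Real.continuous_probChar hB) :
    ∃ (L : ℕ) (α φ : Fin L → ℝ) (w : Fin L → W),
      ∀ x, p x = ∑ n, (α n : ℂ) * exp (I * ((B x (w n) + φ n : ℝ) : ℂ)) := by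
  obtain ⟨c, hc⟩ := (BoundedContinuousFunction.mem_charPoly p).mp hp
  let w := c.coeff.support.equivFin.symm
  refine ⟨_, fun n => ‖c.coeff (w n)‖, fun n => (c.coeff (w n)).arg, fun n => w n, fun x => ?_⟩
  calc p x = ∑ a ∈ c.coeff.support, c.coeff a * exp (I * B x a) := by
        simp only [hc, Finsupp.sum, Real.probChar_apply, mul_comm I]
    _ = ∑ n, c.coeff (w n) * exp (I * B x (w n)) := by
        rw [← Finset.sum_coe_sort, ← w.sum_comp]
    _ = _ := Finset.sum_congr rfl fun _ _ => mul_exp_I_eq_norm_mul_exp_I_add_arg _ _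

theorem uat_exponential_general (B : V →ₗ[ℝ] W →ₗ[ℝ] ℝ) (hB : ∀ w, Continuous fun v => B v w)
    (hB_sep : B.SeparatingLeft) {K : Set V} (hK : IsCompact K) {f : V → ℂ}
    (hf : ContinuousOn f K) {ε : ℝ} (hε : 0 < ε) :
    ∃ (L : ℕ) (α φ : Fin L → ℝ) (w : Fin L → W), ∀ x ∈ K,
      ‖f x - ∑ n, (α n : ℂ) * exp (I * ((B x (w n) + φ n : ℝ) : ℂ))‖ ≤ ε := by
  -- `charPoly` wants a jointly continuous pairing; with `W` discrete, continuity in `V` is enough.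
  let : TopologicalSpace W := ⊥
  have : DiscreteTopology W := ⟨rfl⟩
  have hB_joint : Continuous fun p : V × W => B p.1 p.2 := continuous_prod_of_discrete_right.mpr hB
  obtain ⟨p, hp, near⟩ := exists_mem_charPoly_near_of_isCompact Real.continuous_probChar
    Real.probChar_ne_one hB_joint hB_sep hK hf hε
  obtain ⟨L, α, φ, w, p_eq⟩ := exists_eq_sum_amplitude_phase_of_mem_charPoly hp
  exact ⟨L, α, φ, w, fun x hx => p_eq x ▸ (near x hx).le⟩

end Pairing

/-- Universal approximation theorem with the discriminatory activation `σ(t) = e^{it}`: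
every continuous `f : [0,1]^m → ℂ` is uniformly approximated by finite sums
`∑_{n=1}^{L} α_n e^{i(w_n·x + φ_n)}` with `α_n, φ_n ∈ ℝ` and `w_n ∈ ℝ^m`. -/
theorem uat_exponential (m : ℕ) (hm : 1 ≤ m) (f : (Fin m → ℝ) → ℂ)
    (hf : ContinuousOn f (Set.Icc 0 1)) (ε : ℝ) (hε : 0 < ε) :
    ∃ (L : ℕ) (α φ : Fin L → ℝ) (w : Fin L → Fin m → ℝ),
      ∀ x ∈ Set.Icc (0 : Fin m → ℝ) 1,
        ‖f x - ∑ n : Fin L,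
            (α n : ℂ) * Complex.exp (I * (((∑ k, w n k * x k) + φ n : ℝ) : ℂ))‖ ≤ ε := by
  simpa only [LinearEquiv.coe_coe, dotProductEquiv_apply_apply, dotProduct, mul_comm] using
    uat_exponential_general (dotProductEquiv ℝ (Fin m)).toLinearMap
      (fun w => Continuous.dotProduct continuous_id continuous_const) dotProduct_eq_zero
      isCompact_Icc hf hε
end

section
/- For every m ≥ 1, every continuous function f : [0,1]^m → ℂ with |f(x)| ≤ 1 for all x, and every ε > 0, there exist L ∈ ℕ and unitary matrices A_0, A_1, …, A_L ∈ U(2m) such that sup_{x ∈ [0,1]^m} | (A_L · V_m(x) · A_{L−1} · V_m(x) ⋯ A_1 · V_m(x) · A_0)_{1,1} − f(x) | ≤ ε, where M_{1,1} denotes the top-left entry of the matrix M. -/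
/-!
Let `S` be the uniform closure, in the continuous functions `K = [0,1]^m → M_{2m}(ℂ)`, of the monoid
generated by `V = V_m` and the constant unitaries; its elements are uniform limits of circuits. By
the limit `γ(1/n)^n → exp γ'(0)`, the functions `X` with `exp (tX) ∈ S` for all real `t` form a
closed real Lie algebra, stable under conjugation by units of `S`. It contains the constant
skew-adjoint matrices, and `V⁻¹ ∈ S` because inverting `V` only swaps the two coordinates of each
block.

Let `i, j, k` be `iσ_z, iσ_y, iσ_x` on the plane of two coordinates. If these form the `r`-th block,
then `⁅j, V k V⁻¹⁆ = 2 cos (π x_r) i`, so `cos (π x_r) i` lies in the Lie algebra, and permuting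
coordinates carries it to any other plane. By the brackets of `𝔰𝔲(2)` the scalar functions `a` with
`a i` in the Lie algebra form a closed algebra. As `t ↦ cos (π t)` is injective on `[0,1]`, the
Stone–Weierstrass theorem gives `a i`, hence also `a k`, for every continuous `a`.

Finally, a function with `|f| < 1` can be written with real part `cos θ` and imaginary part
`n_z sin θ`, which makes it a diagonal entry of the rotation `exp (θ (n_z i + n_x k))`, where
`n_z² + n_x² = 1`; and a function with `|f| ≤ 1` is a uniform limit of such functions.
-/

open Complex Matrix

/-- The encoding gate `V_m(x) ∈ M_{2m}(ℂ)`: the diagonal matrix whose `(2k−1)`-th diagonal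
entry is `e^{iπ x_k/2}` and whose `2k`-th diagonal entry is `e^{−iπ x_k/2}` (1-indexed). -/
noncomputable def Vm (m : ℕ) (x : Fin m → ℝ) : Matrix (Fin (2*m)) (Fin (2*m)) ℂ :=
  Matrix.diagonal fun i =>
    if i.val % 2 = 0 then
      Complex.exp (I * (Real.pi : ℂ) * ((x ⟨i.val / 2, by have := i.isLt; omega⟩ : ℝ) : ℂ) / 2)
    else
      Complex.exp (-(I * (Real.pi : ℂ) * ((x ⟨i.val / 2, by have := i.isLt; omega⟩ : ℝ) : ℂ) / 2))

/-- The circuit `A_L · V_m(x) · A_{L−1} · V_m(x) ⋯ A_1 · V_m(x) · A_0`. -/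
noncomputable def circVm (m : ℕ) (L : ℕ) (A : ℕ → Matrix (Fin (2*m)) (Fin (2*m)) ℂ)
    (x : Fin m → ℝ) : Matrix (Fin (2*m)) (Fin (2*m)) ℂ :=
  match L with
  | 0 => A 0
  | n + 1 => A (n + 1) * Vm m x * circVm m n A x

open Filter Topology

attribute [local instance] LieRing.ofAssociativeRing

section BanachAlgebra

variable {B : Type*} [NormedRing B] [NormedAlgebra ℝ B] [CompleteSpace B]

theorem tendsto_pow_exp_of_hasDerivAt {γ : ℝ → B} {X : B} (h1 : γ 0 = 1)
    (hγ : HasDerivAt γ X 0) :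
    Tendsto (fun n : ℕ => γ (n : ℝ)⁻¹ ^ n) atTop (𝓝 (NormedSpace.exp X)) := by
  let _ := NormedAlgebra.restrictScalars ℚ ℝ B
  have hexp : HasStrictFDerivAt (NormedSpace.exp : B → B)
      ((ContinuousLinearEquiv.refl ℝ B : B ≃L[ℝ] B) : B →L[ℝ] B) 0 := hasStrictFDerivAt_exp_zero
  set log := hexp.localInverse
  have hlog : HasFDerivAt log (ContinuousLinearMap.id ℝ B) (γ 0) := by
    simpa [h1] using hexp.to_localInverse.hasFDerivAt
  have hlog1 : log (γ 0) = 0 := by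
    simpa [h1] using hexp.localInverse_apply_image
  have hinv : Tendsto (fun n : ℕ => (n : ℝ)⁻¹) atTop (𝓝[≠] 0) :=
    tendsto_nhdsWithin_iff.2 ⟨tendsto_inv_atTop_nhds_zero_nat (𝕜 := ℝ),
      (eventually_ne_atTop 0).mono fun n hn => by simpa using hn⟩
  have hslope : Tendsto (fun n : ℕ => n • log (γ (n : ℝ)⁻¹)) atTop (𝓝 X) := by
    have h := (hlog.comp_hasDerivAt 0 hγ).tendsto_slope_zero.comp hinv
    simpa [Function.comp_def, hlog1, Nat.cast_smul_eq_nsmul] using h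
  have hright : ∀ᶠ n : ℕ in atTop, NormedSpace.exp (log (γ (n : ℝ)⁻¹)) = γ (n : ℝ)⁻¹ := by
    have h : Tendsto γ (𝓝[≠] 0) (𝓝 (NormedSpace.exp (0 : B))) := by
      simpa [h1] using hγ.continuousAt.tendsto.mono_left nhdsWithin_le_nhds
    exact (h.comp hinv).eventually hexp.eventually_right_inverse
  refine ((NormedSpace.exp_continuous.tendsto X).comp hslope).congr' ?_
  filter_upwards [hright] with n hn
  rw [Function.comp_apply, NormedSpace.exp_nsmul, hn]

theorem exp_mem_of_hasDerivAt {S : Submonoid B} (hS : IsClosed (S : Set B)) {γ : ℝ → B} {X : B}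
    (hmem : ∀ t, γ t ∈ S) (h1 : γ 0 = 1) (hγ : HasDerivAt γ X 0) : NormedSpace.exp X ∈ S :=
  hS.mem_of_tendsto (tendsto_pow_exp_of_hasDerivAt h1 hγ)
    (Eventually.of_forall fun _ => S.pow_mem (hmem _) _)

theorem exp_neg_mul_exp (X : B) : NormedSpace.exp (-X) * NormedSpace.exp X = 1 := by
  let _ := NormedAlgebra.restrictScalars ℚ ℝ B
  rw [← NormedSpace.exp_add_of_commute (Commute.refl X).neg_left, neg_add_cancel,
    NormedSpace.exp_zero]

/-- The subspace of all `X` whose one-parameter group `t ↦ exp (t • X)` stays in the closed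
submonoid `S`. -/
def oneParamSubmodule (S : Submonoid B) (hS : IsClosed (S : Set B)) : Submodule ℝ B where
  carrier := {X | ∀ t : ℝ, NormedSpace.exp (t • X) ∈ S}
  zero_mem' t := by simp
  smul_mem' c X hX t := by simpa only [smul_smul] using hX (t * c)
  add_mem' {X Y} hX hY t := by
    refine exp_mem_of_hasDerivAt hS
      (γ := fun s => NormedSpace.exp (s • t • X) * NormedSpace.exp (s • t • Y))
      (fun s => ?_) (by simp) ?_
    · simpa only [smul_smul] using S.mul_mem (hX (s * t)) (hY (s * t))
    · simpa using (hasDerivAt_exp_smul_const (t • X) (0 : ℝ)).fun_mul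
        (hasDerivAt_exp_smul_const (t • Y) (0 : ℝ))

variable {S : Submonoid B} {hS : IsClosed (S : Set B)}

theorem isClosed_oneParamSubmodule : IsClosed (oneParamSubmodule S hS : Set B) := by
  let _ := NormedAlgebra.restrictScalars ℚ ℝ B
  have h : (oneParamSubmodule S hS : Set B) =
      ⋂ t : ℝ, (fun X => NormedSpace.exp (t • X)) ⁻¹' S := by
    ext X
    simp [oneParamSubmodule]
  rw [h]
  exact isClosed_iInter fun t => hS.preimage
    (NormedSpace.exp_continuous.comp (continuous_const_smul t))

theorem conj_mem_oneParamSubmodule {g : Bˣ} (hg : g ∈ S.units) {X : B}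
    (hX : X ∈ oneParamSubmodule S hS) : ↑g * X * ↑g⁻¹ ∈ oneParamSubmodule S hS := fun t => by
  let _ := NormedAlgebra.restrictScalars ℚ ℝ B
  rw [← smul_mul_assoc, ← mul_smul_comm, NormedSpace.exp_units_conj]
  exact S.mul_mem (S.mul_mem hg.1 (hX t)) hg.2

/-- `⁅X, Y⁆` is the velocity at `0` of the curve `t ↦ exp (tX) Y exp (-tX)`. -/
theorem lie_mem_oneParamSubmodule {X Y : B} (hX : X ∈ oneParamSubmodule S hS)
    (hY : Y ∈ oneParamSubmodule S hS) : ⁅X, Y⁆ ∈ oneParamSubmodule S hS := by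
  have hderiv : HasDerivAt
      (fun t : ℝ => NormedSpace.exp (t • X) * Y * NormedSpace.exp (t • -X)) ⁅X, Y⁆ 0 := by
    simpa [Ring.lie_def, sub_eq_add_neg] using
      ((hasDerivAt_exp_smul_const X (0 : ℝ)).mul_const Y).fun_mul
        (hasDerivAt_exp_smul_const (-X) (0 : ℝ))
  have hcurve (t : ℝ) :
      NormedSpace.exp (t • X) * Y * NormedSpace.exp (t • -X) ∈ oneParamSubmodule S hS := by
    let g : Bˣ := ⟨NormedSpace.exp (t • X), NormedSpace.exp (t • -X),
      by simpa using exp_neg_mul_exp (-(t • X)), by simpa using exp_neg_mul_exp (t • X)⟩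
    exact conj_mem_oneParamSubmodule (g := g)
      ⟨hX t, (oneParamSubmodule S hS).neg_mem hX t⟩ hY
  refine isClosed_oneParamSubmodule.mem_of_tendsto hderiv.tendsto_slope_zero
    (Eventually.of_forall fun t => ?_)
  exact Submodule.smul_mem _ _ (Submodule.sub_mem _ (hcurve _) (hcurve _))

/-- The Lie algebra of the closed submonoid `S`, with the commutator as bracket. -/
def oneParamLieSubalgebra (S : Submonoid B) (hS : IsClosed (S : Set B)) : LieSubalgebra ℝ B where
  __ := oneParamSubmodule S hS
  lie_mem' := lie_mem_oneParamSubmodule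

theorem isClosed_oneParamLieSubalgebra : IsClosed (oneParamLieSubalgebra S hS : Set B) :=
  isClosed_oneParamSubmodule (hS := hS)

theorem conj_mem_oneParamLieSubalgebra {g : Bˣ} (hg : g ∈ S.units) {X : B}
    (hX : X ∈ oneParamLieSubalgebra S hS) : ↑g * X * ↑g⁻¹ ∈ oneParamLieSubalgebra S hS :=
  conj_mem_oneParamSubmodule (hS := hS) hg hX

theorem exp_mem_of_mem_oneParamLieSubalgebra {X : B} (hX : X ∈ oneParamLieSubalgebra S hS) :
    NormedSpace.exp X ∈ S := by
  simpa using hX 1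

/-- Rodrigues' rotation formula. -/
theorem exp_smul_of_pow_three_eq_neg {A : B} (hA : A ^ 3 = -A) (θ : ℝ) :
    NormedSpace.exp (θ • A) = 1 + Real.sin θ • A + (1 - Real.cos θ) • A ^ 2 := by
  set R : ℝ → B := fun t => 1 + Real.sin t • A + (1 - Real.cos t) • A ^ 2 with hR
  have hRA (t : ℝ) : R t * A = Real.cos t • A + Real.sin t • A ^ 2 := by
    simp only [hR, add_mul, one_mul, smul_mul_assoc, ← pow_succ, ← sq, hA]
    module
  have hR' (t : ℝ) : HasDerivAt R (R t * A) t := by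
    rw [hRA]
    simpa using (((Real.hasDerivAt_sin t).smul_const A).const_add 1).fun_add
      (((Real.hasDerivAt_cos t).const_sub 1).smul_const (A ^ 2))
  have hderiv (t : ℝ) : HasDerivAt (fun t => R t * NormedSpace.exp (t • -A)) 0 t := by
    have h := (hR' t).fun_mul (hasDerivAt_exp_smul_const' (-A) t)
    rwa [neg_mul, mul_neg, mul_assoc, add_neg_cancel] at h
  have hconst : R θ * NormedSpace.exp (-(θ • A)) = 1 := by
    have h := is_const_of_deriv_eq_zero (fun t => (hderiv t).differentiableAt)
      (fun t => (hderiv t).deriv) θ 0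
    simpa [hR] using h
  calc NormedSpace.exp (θ • A)
      = R θ * NormedSpace.exp (-(θ • A)) * NormedSpace.exp (θ • A) := by rw [hconst, one_mul]
    _ = R θ := by rw [mul_assoc, exp_neg_mul_exp, mul_one]

end BanachAlgebra

/-- Elements satisfying the commutation relations of the imaginary quaternion units, i.e. of a basis
of `𝔰𝔲(2)`. -/
structure IsSU2Triple {A : Type*} [LieRing A] (i j k : A) : Prop where
  lie_i_j : ⁅i, j⁆ = 2 • k
  lie_j_k : ⁅j, k⁆ = 2 • i
  lie_k_i : ⁅k, i⁆ = 2 • j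

section FunctionAlgebra

variable {K A : Type*} [TopologicalSpace K] [Ring A] [Algebra ℝ A] [TopologicalSpace A]
  [ContinuousSMul ℝ A]

theorem continuous_smul_const (X : A) :
    Continuous fun a : C(K, ℝ) => a • ContinuousMap.const K X :=
  ContinuousMap.continuous_postcomp ⟨fun r : ℝ => r • X, by fun_prop⟩

variable [IsTopologicalRing A]

theorem lie_smul_const_smul_const (a b : C(K, ℝ)) (X Y : A) :
    ⁅a • ContinuousMap.const K X, b • ContinuousMap.const K Y⁆ =
      (a * b) • ContinuousMap.const K ⁅X, Y⁆ := by
  ext x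
  simp [Ring.lie_def, smul_sub, smul_smul, mul_comm (b x)]

variable {L : LieSubalgebra ℝ C(K, A)} {i j k : A}

theorem mul_smul_const_mem (h : ⁅i, j⁆ = 2 • k) {a b : C(K, ℝ)}
    (ha : a • ContinuousMap.const K i ∈ L) (hb : b • ContinuousMap.const K j ∈ L) :
    (a * b) • ContinuousMap.const K k ∈ L := by
  have hhalf : (a * b) • ContinuousMap.const K k = (2⁻¹ : ℝ) •
      ⁅a • ContinuousMap.const K i, b • ContinuousMap.const K j⁆ := by
    rw [lie_smul_const_smul_const, h]
    ext x
    simp [← Nat.cast_smul_eq_nsmul ℝ, smul_smul, mul_comm]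
  rw [hhalf]
  exact L.smul_mem _ (L.lie_mem ha hb)

theorem smul_const_mem_of_lie (h : ⁅i, j⁆ = 2 • k) {a : C(K, ℝ)}
    (ha : a • ContinuousMap.const K i ∈ L) (hj : ContinuousMap.const K j ∈ L) :
    a • ContinuousMap.const K k ∈ L := by
  simpa using mul_smul_const_mem (b := 1) h ha (by simpa using hj)

/-- The scalar functions `a` with `a • i ∈ L`. They form an algebra because the brackets of
an `𝔰𝔲(2)`-triple multiply the coefficients. -/
def coeffSubalgebra (h : IsSU2Triple i j k) (hi : ContinuousMap.const K i ∈ L)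
    (hj : ContinuousMap.const K j ∈ L) : Subalgebra ℝ C(K, ℝ) where
  carrier := {a | a • ContinuousMap.const K i ∈ L}
  add_mem' ha hb := by simpa only [Set.mem_ofPred_eq, add_smul] using L.add_mem ha hb
  mul_mem' ha hb :=
    have hak := smul_const_mem_of_lie h.lie_i_j ha hj
    mul_smul_const_mem h.lie_j_k (smul_const_mem_of_lie h.lie_k_i hak hi)
      (smul_const_mem_of_lie h.lie_i_j hb hj)
  algebraMap_mem' r := by
    have hr : algebraMap ℝ C(K, ℝ) r • ContinuousMap.const K i = r • ContinuousMap.const K i := by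
      ext x
      simp
    simpa only [Set.mem_ofPred_eq, hr] using L.smul_mem r hi

theorem smul_const_mem_of_separatesPoints [CompactSpace K] (hL : IsClosed (L : Set C(K, A)))
    (h : IsSU2Triple i j k) (hi : ContinuousMap.const K i ∈ L) (hj : ContinuousMap.const K j ∈ L)
    (hsep : ∀ x y, x ≠ y → ∃ a : C(K, ℝ), a • ContinuousMap.const K i ∈ L ∧ a x ≠ a y)
    (a : C(K, ℝ)) : a • ContinuousMap.const K i ∈ L := by
  have hdense := ContinuousMap.continuousMap_mem_subalgebra_closure_of_separatesPoints
    (coeffSubalgebra h hi hj) (fun x y hxy =>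
      let ⟨b, hb, hne⟩ := hsep x y hxy
      ⟨b, ⟨b, hb, rfl⟩, hne⟩) a
  have hclosed : IsClosed (coeffSubalgebra h hi hj : Set C(K, ℝ)) :=
    hL.preimage (continuous_smul_const i)
  exact hclosed.closure_subset hdense

end FunctionAlgebra

section Matrices

open scoped Matrix.Norms.L2Operator

variable {n K : Type*} [TopologicalSpace K]

/-- The cosine of the relative phase `v p / v q` of two coordinates. -/
noncomputable def cosRelPhase (v : n → C(K, Circle)) (p q : n) : C(K, ℝ) :=
  ⟨fun x => ((v p x / v q x : Circle) : ℂ).re,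
    continuous_re.comp (continuous_subtype_val.comp ((v p).continuous.div' (v q).continuous))⟩

theorem two_mul_cosRelPhase_apply (v : n → C(K, Circle)) (p q : n) (x : K) :
    2 * (cosRelPhase v p q x : ℂ) =
      v p x * ((v q x)⁻¹ : Circle) + v q x * ((v p x)⁻¹ : Circle) := by
  have hconj : (v q x * ((v p x)⁻¹ : Circle) : ℂ) =
      starRingEnd ℂ (v p x * ((v q x)⁻¹ : Circle) : ℂ) := by
    simp only [map_mul, Circle.coe_inv_eq_conj, conj_conj, mul_comm]
  rw [hconj, add_conj]
  simp [cosRelPhase, div_eq_mul_inv]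

theorem exists_angle_axis (f : C(K, ℂ)) (hf : ∀ x, ‖f x‖ < 1) :
    ∃ θ nz nx : C(K, ℝ), ∀ x, nz x ^ 2 + nx x ^ 2 = 1 ∧
      Real.cos (θ x) + I * (Real.sin (θ x) * nz x : ℝ) = f x := by
  have hsq (x) : (f x).re ^ 2 + (f x).im ^ 2 < 1 := by
    rw [sq, sq, ← normSq_apply, ← Complex.sq_norm]
    exact pow_lt_one₀ (norm_nonneg _) (hf x) two_ne_zero
  have hpos (x) : 0 < 1 - (f x).re ^ 2 := by
    linarith [hsq x, sq_nonneg (f x).im]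
  let θ : C(K, ℝ) := ⟨fun x => Real.arccos (f x).re, by fun_prop⟩
  let nz : C(K, ℝ) := ⟨fun x => (f x).im / √(1 - (f x).re ^ 2),
    Continuous.div (by fun_prop) (by fun_prop) fun x => (Real.sqrt_pos.2 (hpos x)).ne'⟩
  let nx : C(K, ℝ) := ⟨fun x => √(1 - nz x ^ 2), by fun_prop⟩
  refine ⟨θ, nz, nx, fun x => ⟨?_, ?_⟩⟩
  · have hnz : nz x ^ 2 ≤ 1 := by
      simp only [nz, ContinuousMap.coe_mk, div_pow]
      rw [Real.sq_sqrt (hpos x).le, div_le_one (hpos x)]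
      linarith [hsq x]
    have hnx : nx x ^ 2 = 1 - nz x ^ 2 := Real.sq_sqrt (sub_nonneg.2 hnz)
    rw [hnx, add_sub_cancel]
  · have hre : |(f x).re| ≤ 1 := abs_le_one_iff_mul_self_le_one.2 (by linarith [hpos x])
    have hcos : Real.cos (θ x) = (f x).re := Real.cos_arccos (abs_le.1 hre).1 (abs_le.1 hre).2
    have hsin : Real.sin (θ x) * nz x = (f x).im := by
      simp only [θ, nz, ContinuousMap.coe_mk, Real.sin_arccos]
      exact mul_div_cancel₀ _ (Real.sqrt_pos.2 (hpos x)).ne'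
    rw [hcos, hsin, mul_comm, re_add_im]

variable [DecidableEq n]

/-- `iσ_z` on the plane of the coordinates `p` and `q`. -/
def quatI (p q : n) : Matrix n n ℂ := single p p I - single q q I

/-- `iσ_y` on the plane of the coordinates `p` and `q`. -/
def quatJ (p q : n) : Matrix n n ℂ := single p q 1 - single q p 1

/-- `iσ_x` on the plane of the coordinates `p` and `q`. -/
def quatK (p q : n) : Matrix n n ℂ := single p q I + single q p I

theorem star_quatI (p q : n) : star (quatI p q) = -quatI p q := by
  simp [quatI, star_eq_conjTranspose, conjTranspose_single, ← single_neg,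
    sub_eq_add_neg, add_comm]

theorem star_quatJ (p q : n) : star (quatJ p q) = -quatJ p q := by
  simp [quatJ, star_eq_conjTranspose, conjTranspose_single]

theorem star_quatK (p q : n) : star (quatK p q) = -quatK p q := by
  simp [quatK, star_eq_conjTranspose, conjTranspose_single, ← single_neg, add_comm]

variable [Fintype n]

theorem isSU2Triple_quat {p q : n} (h : p ≠ q) :
    IsSU2Triple (quatI p q) (quatJ p q) (quatK p q) := by
  constructor <;>
  · simp only [quatI, quatJ, quatK, Ring.lie_def, mul_add, add_mul, mul_sub, sub_mul,
      single_mul_single_same, single_mul_single_of_ne _ _ _ _ h,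
      single_mul_single_of_ne _ _ _ _ h.symm, I_mul_I, mul_one, one_mul,
      ← single_neg]
    module

theorem diagonal_mul_single_mul_diagonal {R : Type*} [CommSemiring R] (v w : n → R) (i j : n)
    (a : R) : diagonal v * single i j a * diagonal w = (v i * w j) • single i j a := by
  ext k l
  simp only [mul_diagonal, diagonal_mul, Matrix.smul_apply, single_apply, smul_eq_mul]
  split_ifs with h
  · rw [h.1, h.2, mul_right_comm]
  · simp

theorem lie_quatJ_diagonal_mul_quatK_mul_diagonal {p q : n} (h : p ≠ q) (v w : n → ℂ) :
    ⁅quatJ p q, diagonal v * quatK p q * diagonal w⁆ = (v p * w q + v q * w p) • quatI p q := by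
  simp only [quatI, quatJ, quatK, diagonal_mul_single_mul_diagonal, Ring.lie_def, mul_add,
    add_mul, mul_sub, sub_mul, mul_smul_comm, smul_mul_assoc, single_mul_single_same,
    single_mul_single_of_ne _ _ _ _ h, single_mul_single_of_ne _ _ _ _ h.symm, mul_one, one_mul]
  module

theorem sq_smul_quatI_add_smul_quatK {p q : n} (h : p ≠ q) (x y : ℝ) :
    (x • quatI p q + y • quatK p q) ^ 2 =
      -(x ^ 2 + y ^ 2) • (single p p 1 + single q q 1 : Matrix n n ℂ) := by
  simp only [quatI, quatK, sq, mul_add, add_mul, mul_sub, sub_mul, mul_smul_comm,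
    smul_mul_assoc, smul_sub, smul_add, single_mul_single_same, single_mul_single_of_ne _ _ _ _ h,
    single_mul_single_of_ne _ _ _ _ h.symm, I_mul_I, ← single_neg]
  module

theorem exp_smul_quatI_add_quatK_apply {p q : n} (h : p ≠ q) (θ : ℝ) {x y : ℝ}
    (hxy : x ^ 2 + y ^ 2 = 1) :
    NormedSpace.exp (θ • (x • quatI p q + y • quatK p q)) p p =
      Real.cos θ + I * (Real.sin θ * x : ℝ) := by
  have hsq := sq_smul_quatI_add_smul_quatK h x y
  rw [hxy] at hsq
  have hcube : (x • quatI p q + y • quatK p q) ^ 3 = -(x • quatI p q + y • quatK p q) := by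
    rw [pow_succ, hsq]
    simp only [quatI, quatK, mul_add, add_mul, mul_sub, mul_smul_comm, smul_mul_assoc, smul_sub,
      smul_add, single_mul_single_same, single_mul_single_of_ne _ _ _ _ h,
      single_mul_single_of_ne _ _ _ _ h.symm, one_mul]
    module
  rw [exp_smul_of_pow_three_eq_neg hcube, hsq]
  simp [quatI, quatK, h.symm]
  ring

theorem permMatrix_mul_mul_permMatrix_inv {R : Type*} [NonAssocSemiring R] (σ : Equiv.Perm n)
    (M : Matrix n n R) : σ.permMatrix R * M * (σ⁻¹).permMatrix R = M.submatrix σ σ := by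
  rw [Equiv.Perm.permMatrix, Equiv.Perm.permMatrix, PEquiv.toMatrix_toPEquiv_mul,
    PEquiv.mul_toMatrix_toPEquiv]
  rfl

theorem permMatrix_mem_unitaryGroup (σ : Equiv.Perm n) : σ.permMatrix ℂ ∈ unitaryGroup n ℂ := by
  rw [mem_unitaryGroup_iff, star_eq_conjTranspose, conjTranspose_permMatrix]
  simpa using permMatrix_mul_mul_permMatrix_inv σ (1 : Matrix n n ℂ)

/-- The diagonal unitary gate with phases `v`, as a matrix-valued function on `K`. -/
noncomputable def diagGate : (n → C(K, Circle)) →* C(K, Matrix n n ℂ) where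
  toFun v := ⟨fun x => diagonal fun i => (v i x : ℂ), by fun_prop⟩
  map_one' := by
    ext _ : 1
    simp
  map_mul' v w := by
    ext x : 1
    simp

theorem diagGate_apply (v : n → C(K, Circle)) (x : K) :
    diagGate v x = diagonal fun i => (v i x : ℂ) := rfl

variable {S : Submonoid C(K, Matrix n n ℂ)}

theorem diagGate_comp_perm_mem (hU : ∀ U ∈ unitaryGroup n ℂ, ContinuousMap.const K U ∈ S)
    {v : n → C(K, Circle)} (hv : diagGate v ∈ S) (σ : Equiv.Perm n) : diagGate (v ∘ σ) ∈ S := by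
  have hconj : diagGate (v ∘ σ) = ContinuousMap.const K (σ.permMatrix ℂ) * diagGate v *
      ContinuousMap.const K (σ⁻¹.permMatrix ℂ) := by
    ext x : 1
    simp only [ContinuousMap.mul_apply, ContinuousMap.const_apply,
      permMatrix_mul_mul_permMatrix_inv]
    exact (submatrix_diagonal_equiv (fun i => (v i x : ℂ)) σ).symm
  rw [hconj]
  exact S.mul_mem (S.mul_mem (hU _ (permMatrix_mem_unitaryGroup σ)) hv)
    (hU _ (permMatrix_mem_unitaryGroup σ⁻¹))

variable [CompactSpace K]

theorem exp_continuousMap_apply (F : C(K, Matrix n n ℂ)) (x : K) :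
    NormedSpace.exp F x = NormedSpace.exp (F x) := by
  let _ := NormedAlgebra.restrictScalars ℚ ℝ C(K, Matrix n n ℂ)
  exact NormedSpace.map_exp ((Pi.evalRingHom (fun _ : K => Matrix n n ℂ) x).comp
    ContinuousMap.coeFnRingHom) (continuous_eval_const x) F

variable {hS : IsClosed (S : Set C(K, Matrix n n ℂ))}

theorem const_mem_oneParamLieSubalgebra
    (hU : ∀ U ∈ unitaryGroup n ℂ, ContinuousMap.const K U ∈ S) {Y : Matrix n n ℂ}
    (hY : star Y = -Y) : ContinuousMap.const K Y ∈ oneParamLieSubalgebra S hS := fun t => by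
  let _ := NormedAlgebra.restrictScalars ℚ ℝ (Matrix n n ℂ)
  have hskew : t • Y ∈ skewAdjoint (Matrix n n ℂ) := by
    rw [skewAdjoint.mem_iff, star_smul, hY, star_trivial, smul_neg]
  have hexp : NormedSpace.exp (t • ContinuousMap.const K Y) =
      ContinuousMap.const K (NormedSpace.exp (t • Y)) := by
    ext x : 1
    rw [exp_continuousMap_apply]
    rfl
  rw [hexp]
  exact hU _ (NormedSpace.exp_mem_unitary_of_mem_skewAdjoint hskew)

theorem cosRelPhase_smul_quatI_mem
    (hU : ∀ U ∈ unitaryGroup n ℂ, ContinuousMap.const K U ∈ S) {v : n → C(K, Circle)}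
    (hv : diagGate v ∈ S) (hv' : diagGate v⁻¹ ∈ S) {p q : n} (h : p ≠ q) :
    cosRelPhase v p q • ContinuousMap.const K (quatI p q) ∈ oneParamLieSubalgebra S hS := by
  have hunit : diagGate.toHomUnits v ∈ S.units :=
    S.mem_units_of_val_mem_inv_val_mem hv (by rwa [← map_inv])
  have hK : diagGate v * ContinuousMap.const K (quatK p q) * diagGate v⁻¹ ∈
      oneParamLieSubalgebra S hS := by
    have h : _ ∈ oneParamLieSubalgebra S hS :=
      conj_mem_oneParamLieSubalgebra hunit (const_mem_oneParamLieSubalgebra hU (star_quatK p q))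
    simpa only [MonoidHom.coe_toHomUnits, ← map_inv] using h
  have hlie : ⁅ContinuousMap.const K (quatJ p q),
      diagGate v * ContinuousMap.const K (quatK p q) * diagGate v⁻¹⁆ =
        (2 : ℝ) • cosRelPhase v p q • ContinuousMap.const K (quatI p q) := by
    ext x : 1
    have hx := lie_quatJ_diagonal_mul_quatK_mul_diagonal h (fun i => (v i x : ℂ))
      (fun i => ((v i x)⁻¹ : Circle))
    rw [← two_mul_cosRelPhase_apply] at hx
    refine hx.trans ?_
    simp [smul_smul, ← coe_smul]
  rw [← inv_smul_smul₀ (two_ne_zero (α := ℝ)) (cosRelPhase v p q • _), ← hlie]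
  exact LieSubalgebra.smul_mem _ _
    (LieSubalgebra.lie_mem _ (const_mem_oneParamLieSubalgebra hU (star_quatJ p q)) hK)

theorem cosRelPhase_smul_quatI_mem_of_ne
    (hU : ∀ U ∈ unitaryGroup n ℂ, ContinuousMap.const K U ∈ S) {v : n → C(K, Circle)}
    (hv : diagGate v ∈ S) (hv' : diagGate v⁻¹ ∈ S) {p q i j : n} (hpq : p ≠ q) (hij : i ≠ j) :
    cosRelPhase v i j • ContinuousMap.const K (quatI p q) ∈ oneParamLieSubalgebra S hS := by
  obtain ⟨σ, rfl, rfl⟩ :=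
    MulAction.is_two_pretransitive_iff.1 (Equiv.Perm.isMultiplyPretransitive n 2) hpq hij
  exact cosRelPhase_smul_quatI_mem (v := v ∘ σ) hU (diagGate_comp_perm_mem hU hv σ)
    (diagGate_comp_perm_mem hU hv' σ) hpq

theorem exists_mem_apply_eq_of_separatesPoints (hS : IsClosed (S : Set C(K, Matrix n n ℂ)))
    (hU : ∀ U ∈ unitaryGroup n ℂ, ContinuousMap.const K U ∈ S)
    (hsep : ∀ x y : K, x ≠ y → ∃ v, diagGate v ∈ S ∧ diagGate v⁻¹ ∈ S ∧
      ∃ i j, i ≠ j ∧ cosRelPhase v i j x ≠ cosRelPhase v i j y)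
    {p q : n} (hpq : p ≠ q) {f : C(K, ℂ)} (hf : ∀ x, ‖f x‖ < 1) :
    ∃ F ∈ S, ∀ x, F x p p = f x := by
  let 𝔤 := oneParamLieSubalgebra S hS
  have hJ : ContinuousMap.const K (quatJ p q) ∈ 𝔤 :=
    const_mem_oneParamLieSubalgebra hU (star_quatJ p q)
  have hI (a : C(K, ℝ)) : a • ContinuousMap.const K (quatI p q) ∈ 𝔤 := by
    refine smul_const_mem_of_separatesPoints isClosed_oneParamLieSubalgebra (isSU2Triple_quat hpq)
      (const_mem_oneParamLieSubalgebra hU (star_quatI p q)) hJ (fun x y hxy => ?_) a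
    obtain ⟨v, hv, hv', i, j, hij, hne⟩ := hsep x y hxy
    exact ⟨_, cosRelPhase_smul_quatI_mem_of_ne hU hv hv' hpq hij, hne⟩
  have hK (a : C(K, ℝ)) : a • ContinuousMap.const K (quatK p q) ∈ 𝔤 :=
    smul_const_mem_of_lie (isSU2Triple_quat hpq).lie_i_j (hI a) hJ
  obtain ⟨θ, nz, nx, h⟩ := exists_angle_axis f hf
  refine ⟨_, exp_mem_of_mem_oneParamLieSubalgebra
    (𝔤.add_mem (hI (θ * nz)) (hK (θ * nx))), fun x => ?_⟩
  rw [← (h x).2, ← exp_smul_quatI_add_quatK_apply hpq (θ x) (h x).1, exp_continuousMap_apply]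
  simp [smul_smul]

end Matrices

section Circuits

open scoped Matrix.Norms.L2Operator

/-- The cube `[0,1]^m`. -/
abbrev Cube (m : ℕ) : Type := Set.Icc (0 : Fin m → ℝ) 1

/-- The matrices on which `Vm m` acts. -/
abbrev GateMatrix (m : ℕ) : Type := Matrix (Fin (2 * m)) (Fin (2 * m)) ℂ

variable {m : ℕ}

/-- Index `b + 2k` of the `b`-th coordinate of the `k`-th block. -/
def blockEquiv (m : ℕ) : Fin m × Fin 2 ≃ Fin (2 * m) :=
  finProdFinEquiv.trans (finCongr (mul_comm m 2))

/-- The phase `e^{iπ x_k / 2}`. -/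
noncomputable def halfPhase (k : Fin m) : C(Cube m, Circle) :=
  (Circle.exp.comp ⟨fun x : Fin m → ℝ => Real.pi * x k / 2, by fun_prop⟩).restrict _

theorem halfPhase_apply (k : Fin m) (x : Cube m) :
    halfPhase k x = Circle.exp (Real.pi * x.1 k / 2) := rfl

/-- The phases on the diagonal of `Vm m`. -/
noncomputable def encodingPhase (m : ℕ) : Fin (2 * m) → C(Cube m, Circle) :=
  (fun kb => ![halfPhase kb.1, (halfPhase kb.1)⁻¹] kb.2) ∘ (blockEquiv m).symm

theorem diagGate_encodingPhase_apply (x : Cube m) : diagGate (encodingPhase m) x = Vm m x := by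
  rw [diagGate_apply, Vm]
  congr 1
  ext i
  obtain ⟨⟨k, b⟩, rfl⟩ := (blockEquiv m).surjective i
  have hval : (blockEquiv m (k, b) : ℕ) = b + 2 * k := rfl
  have hmod : (blockEquiv m (k, b) : ℕ) % 2 = b := by omega
  have hdiv : (⟨(blockEquiv m (k, b) : ℕ) / 2, by omega⟩ : Fin m) = k := by
    simp only [Fin.ext_iff]
    omega
  have hexp : (halfPhase k x : ℂ) = Complex.exp (I * Real.pi * (x.1 k : ℝ) / 2) := by
    rw [halfPhase_apply, Circle.coe_exp]
    push_cast
    ring_nf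
  simp only [hmod, hdiv, Complex.exp_neg, ← hexp]
  fin_cases b <;> simp [encodingPhase]

theorem encodingPhase_inv :
    (encodingPhase m)⁻¹ =
      encodingPhase m ∘ (blockEquiv m).permCongr ((Equiv.refl _).prodCongr (Equiv.swap 0 1)) := by
  ext i x : 2
  obtain ⟨⟨k, b⟩, rfl⟩ := (blockEquiv m).surjective i
  fin_cases b <;> simp [encodingPhase]

theorem cosRelPhase_encodingPhase_apply (k : Fin m) (x : Cube m) :
    cosRelPhase (encodingPhase m) (blockEquiv m (k, 0)) (blockEquiv m (k, 1)) x =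
      Real.cos (Real.pi * x.1 k) := by
  have hexp : encodingPhase m (blockEquiv m (k, 0)) x / encodingPhase m (blockEquiv m (k, 1)) x =
      Circle.exp (Real.pi * x.1 k) := by
    simp [encodingPhase, halfPhase_apply, ← Circle.exp_add]
  change Complex.re (_ / _ : Circle) = _
  rw [hexp, Circle.coe_exp, exp_ofReal_mul_I_re]

theorem exists_cosRelPhase_encodingPhase_ne {x y : Cube m} (h : x ≠ y) :
    ∃ i j, i ≠ j ∧
      cosRelPhase (encodingPhase m) i j x ≠ cosRelPhase (encodingPhase m) i j y := by
  obtain ⟨k, hk⟩ := Function.ne_iff.1 (Subtype.coe_injective.ne h)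
  refine ⟨blockEquiv m (k, 0), blockEquiv m (k, 1), by simp, ?_⟩
  rw [cosRelPhase_encodingPhase_apply, cosRelPhase_encodingPhase_apply]
  have hmem (z : Cube m) : Real.pi * z.1 k ∈ Set.Icc 0 Real.pi :=
    ⟨mul_nonneg Real.pi_pos.le (z.2.1 k), mul_le_of_le_one_right Real.pi_pos.le (z.2.2 k)⟩
  exact fun hcos => hk (mul_left_cancel₀ Real.pi_ne_zero (Real.injOn_cos (hmem x) (hmem y) hcos))

/-- `F` is the matrix-valued function computed by some circuit with unitary gates. -/
def IsCircuit (F : C(Cube m, GateMatrix m)) : Prop :=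
  ∃ (L : ℕ) (A : ℕ → GateMatrix m),
    (∀ j, A j ∈ unitaryGroup (Fin (2 * m)) ℂ) ∧ ∀ x : Cube m, circVm m L A x = F x

/-- The monoid generated by the encoding gate and the constant unitaries. -/
noncomputable def circuitMonoid (m : ℕ) : Submonoid C(Cube m, GateMatrix m) :=
  Submonoid.closure ({diagGate (encodingPhase m)} ∪
    ContinuousMap.const (Cube m) '' unitaryGroup (Fin (2 * m)) ℂ)

theorem circVm_congr {L : ℕ} {A A' : ℕ → GateMatrix m} (h : ∀ j ≤ L, A j = A' j)
    (x : Fin m → ℝ) : circVm m L A x = circVm m L A' x := by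
  induction L with
  | zero => exact h 0 le_rfl
  | succ L ih => rw [circVm, circVm, h _ le_rfl, ih fun j hj => h j (hj.trans L.le_succ)]

theorem isCircuit_const {U : GateMatrix m} (hU : U ∈ unitaryGroup (Fin (2 * m)) ℂ) :
    IsCircuit (ContinuousMap.const (Cube m) U) :=
  ⟨0, fun _ => U, fun _ => hU, fun _ => rfl⟩

theorem IsCircuit.const_mul_diagGate_mul {F : C(Cube m, GateMatrix m)} (hF : IsCircuit F)
    {U : GateMatrix m} (hU : U ∈ unitaryGroup (Fin (2 * m)) ℂ) :
    IsCircuit (ContinuousMap.const (Cube m) U * (diagGate (encodingPhase m) * F)) := by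
  obtain ⟨L, A, hA, hF⟩ := hF
  refine ⟨L + 1, Function.update A (L + 1) U, fun j => ?_, fun x => ?_⟩
  · rw [Function.update_apply]
    split_ifs
    exacts [hU, hA j]
  · rw [circVm, Function.update_self,
      circVm_congr fun j hj => Function.update_of_ne (Nat.lt_succ_of_le hj).ne U A, hF, mul_assoc,
      ← diagGate_encodingPhase_apply]
    rfl

/-- Carrying a unitary factor `U` through the induction merges adjacent constant unitaries. -/
theorem isCircuit_const_mul_of_mem {F : C(Cube m, GateMatrix m)} (hF : F ∈ circuitMonoid m)
    {U : GateMatrix m} (hU : U ∈ unitaryGroup (Fin (2 * m)) ℂ) :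
    IsCircuit (ContinuousMap.const (Cube m) U * F) := by
  induction hF using Submonoid.closure_induction_left generalizing U with
  | one => simpa using isCircuit_const hU
  | mul_left G hG F _ ih =>
    rcases hG with rfl | ⟨W, hW, rfl⟩
    · have hF : IsCircuit F := by simpa using ih (one_mem _)
      exact hF.const_mul_diagGate_mul hU
    · have hUW : ContinuousMap.const (Cube m) (U * W) =
          ContinuousMap.const (Cube m) U * ContinuousMap.const (Cube m) W := rfl
      rw [← mul_assoc, ← hUW]
      exact ih (mul_mem hU hW)

theorem isCircuit_of_mem {F : C(Cube m, GateMatrix m)} (hF : F ∈ circuitMonoid m) :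
    IsCircuit F := by
  simpa using isCircuit_const_mul_of_mem hF (one_mem _)

theorem exists_isCircuit_near {F : C(Cube m, GateMatrix m)}
    (hF : F ∈ (circuitMonoid m).topologicalClosure) (p q : Fin (2 * m)) {ε : ℝ} (hε : 0 < ε) :
    ∃ G, IsCircuit G ∧ ∀ x, ‖G x p q - F x p q‖ < ε := by
  let entry : C(GateMatrix m, ℂ) := ⟨fun M => M p q, by fun_prop⟩
  have hentry := map_mem_closure (ContinuousMap.continuous_postcomp entry) hF
    fun G hG => Set.mem_image_of_mem _ hG
  obtain ⟨_, ⟨G, hG, rfl⟩, hdist⟩ := Metric.mem_closure_iff.1 hentry ε hε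
  refine ⟨G, isCircuit_of_mem hG, fun x => ?_⟩
  rw [← dist_eq_norm, dist_comm]
  exact (ContinuousMap.dist_lt_iff hε).1 hdist x

theorem exists_mem_closure_circuitMonoid_apply_eq {p q : Fin (2 * m)} (hpq : p ≠ q)
    {f : C(Cube m, ℂ)} (hf : ∀ x, ‖f x‖ < 1) :
    ∃ F ∈ (circuitMonoid m).topologicalClosure, ∀ x, F x p p = f x := by
  have hsub := (circuitMonoid m).le_topologicalClosure
  have hU (U) (hU : U ∈ unitaryGroup (Fin (2 * m)) ℂ) :
      ContinuousMap.const (Cube m) U ∈ (circuitMonoid m).topologicalClosure :=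
    hsub (Submonoid.subset_closure (Or.inr ⟨U, hU, rfl⟩))
  have hV : diagGate (encodingPhase m) ∈ (circuitMonoid m).topologicalClosure :=
    hsub (Submonoid.subset_closure (Or.inl rfl))
  have hV' : diagGate (encodingPhase m)⁻¹ ∈ (circuitMonoid m).topologicalClosure := by
    rw [encodingPhase_inv]
    exact diagGate_comp_perm_mem hU hV _
  exact exists_mem_apply_eq_of_separatesPoints (circuitMonoid m).isClosed_topologicalClosure hU
    (fun x y hxy => ⟨_, hV, hV', exists_cosRelPhase_encodingPhase_ne hxy⟩) hpq hf

end Circuits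

/-- Universality of the multi-qubit circuit with fixed encoding gates `V_m(x)` interleaved
with trainable unitaries, in the sup norm on `[0,1]^m`, for continuous `f` with `|f| ≤ 1`. -/
theorem multiqubit_Vm_universal (m : ℕ) (hm : 1 ≤ m) (f : (Fin m → ℝ) → ℂ)
    (hf : ContinuousOn f (Set.Icc 0 1))
    (hbd : ∀ x ∈ Set.Icc (0 : Fin m → ℝ) 1, ‖f x‖ ≤ 1)
    (ε : ℝ) (hε : 0 < ε) :
    ∃ (L : ℕ) (A : ℕ → Matrix (Fin (2*m)) (Fin (2*m)) ℂ),
      (∀ j, A j ∈ Matrix.unitaryGroup (Fin (2*m)) ℂ) ∧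
      ∀ x ∈ Set.Icc (0 : Fin m → ℝ) 1,
        ‖(circVm m L A x) ⟨0, by omega⟩ ⟨0, by omega⟩ - f x‖ ≤ ε := by
  let f₀ : C(Cube m, ℂ) := ⟨_, hf.domRestrict⟩
  have hf₀ : f₀ ∈ closure (Metric.ball 0 1) := by
    rw [closure_ball 0 one_ne_zero, mem_closedBall_zero_iff]
    exact (ContinuousMap.norm_le f₀ zero_le_one).2 fun x => hbd x x.2
  obtain ⟨g, hg, hgf⟩ := Metric.mem_closure_iff.1 hf₀ (ε / 2) (half_pos hε)
  have hg1 (x) : ‖g x‖ < 1 := (g.norm_coe_le_norm x).trans_lt (mem_ball_zero_iff.1 hg)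
  have hne : (⟨0, by omega⟩ : Fin (2 * m)) ≠ ⟨1, by omega⟩ := by simp
  obtain ⟨F, hF, hFg⟩ := exists_mem_closure_circuitMonoid_apply_eq hne hg1
  obtain ⟨G, ⟨L, A, hA, hG⟩, hGF⟩ :=
    exists_isCircuit_near hF ⟨0, by omega⟩ ⟨0, by omega⟩ (half_pos hε)
  refine ⟨L, A, hA, fun x hx => ?_⟩
  have hcirc := hGF ⟨x, hx⟩
  have happrox : dist (f x) (g ⟨x, hx⟩) < ε / 2 :=
    (ContinuousMap.dist_lt_iff (half_pos hε)).1 hgf ⟨x, hx⟩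
  rw [← hG, hFg] at hcirc
  rw [dist_comm, dist_eq_norm] at happrox
  exact (norm_sub_le_norm_sub_add_norm_sub _ (g ⟨x, hx⟩) _).trans (by linarith)
end
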